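/- Let d ≥ 2, let Ω ⊂ ℝ^d be a bounded Lipschitz domain, let 1 < p < ∞ and 1/p + 1/q = 1. Suppose that for each x ∈ Ω there exists a function V^x, biharmonic in Ω, with (∇V^x)* ∈ L^q(∂Ω, σ) and with D^α V^x = D^α Γ^x nontangentially σ-a.e. on ∂Ω for every |α| ≤ 1 (i.e., a solution of the L^q Dirichlet problem with boundary data D^α Γ^x). Then any solution of the L^p regularity problem is unique: if u is biharmonic in Ω, (∇²u)* ∈ L^p(∂Ω, σ), and u and ∇u have nontangential limit 0 σ-a.e. on ∂Ω, then u ≡ 0 in Ω. -/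

import Mathlib

open MeasureTheory Metric Filter Set
open scoped ENNReal NNReal Topology RealInnerProductSpace

noncomputable section

/-- Euclidean space `ℝ^d`. -/
abbrev Euc (d : ℕ) := EuclideanSpace ℝ (Fin d)

variable {d : ℕ}

/-- The partial derivative `D_i u` in the `i`-th coordinate direction. -/
def pder (i : Fin d) (u : Euc d → ℝ) : Euc d → ℝ :=
  fun x => fderiv ℝ u x (EuclideanSpace.single i 1)

/-- The Laplacian `Δu = ∑ i, D_i D_i u`. -/
def lap (u : Euc d → ℝ) : Euc d → ℝ := fun x => ∑ i, pder i (pder i u) x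

/-- The bilaplacian `Δ²u`. -/
def bilap (u : Euc d → ℝ) : Euc d → ℝ := lap (lap u)

/-- `u` is biharmonic in the open set `Ω` : it is smooth there and `Δ²u = 0`. -/
def Biharmonic (Ω : Set (Euc d)) (u : Euc d → ℝ) : Prop :=
  ContDiffOn ℝ (⊤ : ℕ∞) u Ω ∧ ∀ x ∈ Ω, bilap u x = 0

/-- `|∇u|`. -/
def gnorm1 (u : Euc d → ℝ) : Euc d → ℝ :=
  fun x => Real.sqrt (∑ i, (pder i u x) ^ 2)

/-- `|∇²u|`. -/
def gnorm2 (u : Euc d → ℝ) : Euc d → ℝ :=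
  fun x => Real.sqrt (∑ i, ∑ j, (pder i (pder j u) x) ^ 2)

/-- `|∇³u|`. -/
def gnorm3 (u : Euc d → ℝ) : Euc d → ℝ :=
  fun x => Real.sqrt (∑ i, ∑ j, ∑ k, (pder i (pder j (pder k u)) x) ^ 2)

/-- The last ("vertical") coordinate `x_d` of a point of `ℝ^d`. -/
def vertCoord (d : ℕ) (x : Euc d) : ℝ :=
  if h : 0 < d then x ⟨d - 1, Nat.sub_lt h one_pos⟩ else 0

/-- The vertical unit vector `e_d`. -/
def vertDir (d : ℕ) : Euc d :=
  if h : 0 < d then EuclideanSpace.single ⟨d - 1, Nat.sub_lt h one_pos⟩ 1 else 0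

/-- The horizontal coordinates `x′` of a point of `ℝ^d`. -/
def graphCoord (d : ℕ) (x : Euc d) : Euc (d - 1) :=
  WithLp.toLp 2 fun i => x (Fin.castLE (Nat.sub_le d 1) i)

/-- The partial derivative `D_d u` in the vertical direction. -/
def pdLast (u : Euc d → ℝ) : Euc d → ℝ := fun x => fderiv ℝ u x (vertDir d)

/-- A bounded Lipschitz domain: a bounded connected open set whose boundary is covered by
finitely many open sets, in each of which, after a rigid motion, the boundary is the graph of
a Lipschitz function and the domain lies above the graph. -/
def IsLipschitzDomain (Ω : Set (Euc d)) : Prop :=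
  IsOpen Ω ∧ Bornology.IsBounded Ω ∧ IsConnected Ω ∧
  ∃ (N : ℕ) (U : Fin N → Set (Euc d)),
    (∀ i, IsOpen (U i)) ∧ (frontier Ω ⊆ ⋃ i, U i) ∧
    ∀ i, ∃ (R : Euc d ≃ᵢ Euc d) (M : ℝ≥0) (η : Euc (d - 1) → ℝ),
      LipschitzWith M η ∧
      U i ∩ Ω = U i ∩ (R ⁻¹' {x | η (graphCoord d x) < vertCoord d x}) ∧
      U i ∩ frontier Ω = U i ∩ (R ⁻¹' {x | vertCoord d x = η (graphCoord d x)})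

/-- The nontangential approach cone (aperture 1) with vertex `Q ∈ ∂Ω`. -/
def ntCone (Ω : Set (Euc d)) (Q : Euc d) : Set (Euc d) :=
  {x | x ∈ Ω ∧ dist x Q < 2 * Metric.infDist x (frontier Ω)}

/-- The nontangential maximal function `(w)*`. -/
def ntMax (Ω : Set (Euc d)) (w : Euc d → ℝ) (Q : Euc d) : ℝ≥0∞ :=
  ⨆ x ∈ ntCone Ω Q, (‖w x‖₊ : ℝ≥0∞)

/-- `w` has nontangential limit `L` at the boundary point `Q`. -/
def NTLim (Ω : Set (Euc d)) (w : Euc d → ℝ) (Q : Euc d) (L : ℝ) : Prop :=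
  Filter.Tendsto w (nhdsWithin Q (ntCone Ω Q)) (nhds L)

/-- The surface measure on `∂Ω`: the `(d-1)`-dimensional Hausdorff measure restricted
to the boundary. -/
def sMeasure (Ω : Set (Euc d)) : Measure (Euc d) :=
  (μH[(d : ℝ) - 1]).restrict (frontier Ω)

/-- The `L^p(∂Ω)` norm of the nontangential maximal function of `w`. -/
def ntMaxLp (Ω : Set (Euc d)) (w : Euc d → ℝ) (p : ℝ) : ℝ≥0∞ :=
  (∫⁻ Q, (ntMax Ω w Q) ^ p ∂(sMeasure Ω)) ^ (1 / p)

/-- The `L^p(∂Ω, σ)` norm of a function. -/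
def bLp (Ω : Set (Euc d)) (f : Euc d → ℝ) (p : ℝ) : ℝ≥0∞ :=
  eLpNorm f (ENNReal.ofReal p) (sMeasure Ω)

/-- A test function: smooth with compact support in `ℝ^d`. -/
def TestFun (f : Euc d → ℝ) : Prop := ContDiff ℝ (⊤ : ℕ∞) f ∧ HasCompactSupport f

/-- `u` has boundary data `(D^α f)_{|α| ≤ 1}` in the sense of nontangential convergence
`σ`-a.e. on `∂Ω`. -/
def HasBVals1 (Ω : Set (Euc d)) (u f : Euc d → ℝ) : Prop :=
  ∀ᵐ Q ∂(sMeasure Ω), NTLim Ω u Q (f Q) ∧ ∀ i, NTLim Ω (pder i u) Q (pder i f Q)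

/-- `n` is the (σ-a.e. defined) outward unit normal of `Ω`, characterized by the
Gauss–Green formula. -/
def IsOutwardNormal (Ω : Set (Euc d)) (n : Euc d → Euc d) : Prop :=
  (∀ᵐ Q ∂(sMeasure Ω), ‖n Q‖ = 1) ∧
  ∀ φ : Euc d → Euc d, ContDiff ℝ (⊤ : ℕ∞) φ → HasCompactSupport φ →
    ∫ x in Ω, (∑ i, pder i (fun y => φ y i) x) = ∫ Q, (inner ℝ (φ Q) (n Q) : ℝ) ∂(sMeasure Ω)

/-- `|∇_t h|`, the norm of the tangential gradient `∇h − (∇h·n)n` of `h` on `∂Ω`. -/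
def tgradNorm (n : Euc d → Euc d) (h : Euc d → ℝ) (Q : Euc d) : ℝ :=
  Real.sqrt (∑ i, (pder i h Q - (∑ j, n Q j * pder j h Q) * n Q i) ^ 2)

/-- `|∇_t ∇f|`, the norm of the tangential gradient of the full gradient of `f`. -/
def tgrad2Norm (n : Euc d → Euc d) (f : Euc d → ℝ) (Q : Euc d) : ℝ :=
  Real.sqrt (∑ k, (tgradNorm n (pder k f) Q) ^ 2)

/-- Unique solvability of the `L^q` Dirichlet problem `(D)_q` for `Δ²u = 0` in `Ω`:
existence, with uniform estimate, of solutions with Whitney-array boundary data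
`(D^α f)_{|α|≤1}`, together with uniqueness. -/
def DirichletSolvable (Ω : Set (Euc d)) (q : ℝ) : Prop :=
  (∃ C : ℝ≥0, ∀ f : Euc d → ℝ, TestFun f →
    ∃ u : Euc d → ℝ, Biharmonic Ω u ∧ ntMaxLp Ω (gnorm1 u) q < ⊤ ∧ HasBVals1 Ω u f ∧
      ntMaxLp Ω (gnorm1 u) q + ntMaxLp Ω u q ≤
        C * (bLp Ω f q + ∑ i : Fin d, bLp Ω (pder i f) q)) ∧
  (∀ u : Euc d → ℝ, Biharmonic Ω u → ntMaxLp Ω (gnorm1 u) q < ⊤ →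
    HasBVals1 Ω u (fun _ => 0) → ∀ x ∈ Ω, u x = 0)

/-- Unique solvability of the `L^p` regularity problem `(R)_p` for `Δ²u = 0` in `Ω`:
existence, with uniform estimate, of solutions with Whitney-array boundary data
`(D^α g)_{|α|≤2}`, together with uniqueness. -/
def RegularitySolvable (Ω : Set (Euc d)) (p : ℝ) : Prop :=
  (∃ (n : Euc d → Euc d) (C : ℝ≥0), IsOutwardNormal Ω n ∧
    ∀ g : Euc d → ℝ, TestFun g →
    ∃ u : Euc d → ℝ, Biharmonic Ω u ∧ ntMaxLp Ω (gnorm2 u) p < ⊤ ∧ HasBVals1 Ω u g ∧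
      ntMaxLp Ω (gnorm2 u) p ≤
        C * ((∑ i : Fin d, bLp Ω (tgradNorm n (pder i g)) p) + bLp Ω g p +
          ∑ i : Fin d, bLp Ω (pder i g) p)) ∧
  (∀ u : Euc d → ℝ, Biharmonic Ω u → ntMaxLp Ω (gnorm2 u) p < ⊤ →
    HasBVals1 Ω u (fun _ => 0) → ∀ x ∈ Ω, u x = 0)

/-- `u` is the solution of the `L²` regularity problem in `Ω` with boundary data
`(D^α f)_{|α|≤1}`. -/
def IsL2Sol (Ω : Set (Euc d)) (f u : Euc d → ℝ) : Prop :=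
  Biharmonic Ω u ∧ ntMaxLp Ω (gnorm2 u) 2 < ⊤ ∧ HasBVals1 Ω u f

open Classical in
/-- The solution of the `L²` regularity problem with data `f` (junk value if none exists). -/
def L2Sol (Ω : Set (Euc d)) (f : Euc d → ℝ) : Euc d → ℝ :=
  if h : ∃ u, IsL2Sol Ω f u then h.choose else 0

/-- The bilinear form `Λ[f,g] = −∫_Ω Δu·Δv`, where `u, v` solve the `L²` regularity
problem with data `f, g`. -/
def biForm (Ω : Set (Euc d)) (f g : Euc d → ℝ) : ℝ :=
  - ∫ x in Ω, lap (L2Sol Ω f) x * lap (L2Sol Ω g) x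

/-- The bilinear estimate `|Λ[f,g]| ≤ C (‖∇_t∇f‖_p + ‖∇f‖_p + ‖f‖_p)(‖∇g‖_q + ‖g‖_q)`
for all test functions `f, g`. -/
def BilinearEstimate (Ω : Set (Euc d)) (p q : ℝ) : Prop :=
  ∃ (n : Euc d → Euc d) (C : ℝ≥0), IsOutwardNormal Ω n ∧
    ∀ f g : Euc d → ℝ, TestFun f → TestFun g →
      (‖biForm Ω f g‖₊ : ℝ≥0∞) ≤
        C * (bLp Ω (tgrad2Norm n f) p + bLp Ω (gnorm1 f) p + bLp Ω f p) *
          (bLp Ω (gnorm1 g) q + bLp Ω g q)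

/-- The fundamental solution of `Δ²` in `ℝ^d` with pole at the origin (with a dimensional
normalizing constant `c ≠ 0`). -/
def fundSol (d : ℕ) (c : ℝ) (x : Euc d) : ℝ :=
  if d = 2 ∨ d = 4 then c * ‖x‖ ^ ((4 : ℝ) - d) * Real.log ‖x‖
  else c * ‖x‖ ^ ((4 : ℝ) - d)

/-!
Let `E` agree with `Γ(· - x)` off a small ball about `x` and be smooth in `ℝ^d`. Then `w = E - V^x`
has zero boundary values to first order. Green's identity for `u` and `w`, localized by a cutoff
function which is `1` off the collar `{dist(·, ∂Ω) < δ}`, gives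
`|∫ u Δ²w| ≤ C δ⁻¹ ∫_collar (|∇w| + δ⁻¹|w|) (|∇²u| + δ⁻¹|∇u| + δ⁻²|u|)`.
By Hardy's inequality and the nontangential maximal functions, the two factors, measured in `L^q`
and `L^p` of the collar with respect to `δ⁻¹ dx`, tend to zero and stay bounded, respectively. So
`∫ u Δ²E = 0`. If the `E` for varying radii come from one profile by scaling, then `Δ²E` is a
nonzero multiple of an approximate identity at `x`, and `u x = 0`.
-/

variable {Ω : Set (Euc d)}

/-! ### Coordinate derivatives -/

section CoordinateDerivatives

variable {f g : Euc d → ℝ} {O : Set (Euc d)} {x : Euc d}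

lemma eventuallyEq_pder (h : f =ᶠ[𝓝 x] g) (i : Fin d) : pder i f =ᶠ[𝓝 x] pder i g :=
  h.fderiv (𝕜 := ℝ) |>.mono fun _ hy => by simp only [pder, hy]

lemma eventuallyEq_lap (h : f =ᶠ[𝓝 x] g) : lap f =ᶠ[𝓝 x] lap g := by
  filter_upwards [eventually_all.2 fun i => eventuallyEq_pder (eventuallyEq_pder h i) i] with y hy
  exact Finset.sum_congr rfl fun i _ => hy i

lemma contDiffAt_pder (hf : ContDiffAt ℝ (⊤ : ℕ∞) f x) (i : Fin d) :
    ContDiffAt ℝ (⊤ : ℕ∞) (pder i f) x :=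
  (hf.fderiv_right (m := (⊤ : ℕ∞)) (by simp)).clm_apply contDiffAt_const

lemma contDiff_pder (hf : ContDiff ℝ (⊤ : ℕ∞) f) (i : Fin d) : ContDiff ℝ (⊤ : ℕ∞) (pder i f) :=
  contDiff_iff_contDiffAt.2 fun _ => contDiffAt_pder hf.contDiffAt i

lemma contDiffOn_pder (hO : IsOpen O) (hf : ContDiffOn ℝ (⊤ : ℕ∞) f O) (i : Fin d) :
    ContDiffOn ℝ (⊤ : ℕ∞) (pder i f) O :=
  fun _ hx => (contDiffAt_pder (hf.contDiffAt (hO.mem_nhds hx)) i).contDiffWithinAt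

lemma contDiff_lap (hf : ContDiff ℝ (⊤ : ℕ∞) f) : ContDiff ℝ (⊤ : ℕ∞) (lap f) :=
  ContDiff.sum fun i _ => contDiff_pder (contDiff_pder hf i) i

lemma contDiffOn_lap (hO : IsOpen O) (hf : ContDiffOn ℝ (⊤ : ℕ∞) f O) :
    ContDiffOn ℝ (⊤ : ℕ∞) (lap f) O :=
  ContDiffOn.sum fun i _ => contDiffOn_pder hO (contDiffOn_pder hO hf i) i

lemma differentiable_of_contDiff_infty (hf : ContDiff ℝ (⊤ : ℕ∞) f) : Differentiable ℝ f :=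
  hf.differentiable (by simp)

lemma differentiableAt_of_contDiffAt_infty (hf : ContDiffAt ℝ (⊤ : ℕ∞) f x) :
    DifferentiableAt ℝ f x :=
  hf.differentiableAt (by simp)

lemma eventually_differentiableAt (hf : ContDiffAt ℝ (⊤ : ℕ∞) f x) :
    ∀ᶠ y in 𝓝 x, DifferentiableAt ℝ f y :=
  ((hf.of_le (m := 1) (by simp)).eventually (by simp)).mono fun _ hy =>
    hy.differentiableAt (by simp)

@[simp]
lemma pder_const (a : ℝ) (i : Fin d) : pder i (fun _ : Euc d => a) = fun _ => 0 := by
  ext x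
  simp [pder]

@[simp]
lemma lap_const (a : ℝ) : lap (fun _ : Euc d => a) = fun _ => 0 := by
  ext x
  simp [lap]

lemma pder_add (hf : DifferentiableAt ℝ f x) (hg : DifferentiableAt ℝ g x) (i : Fin d) :
    pder i (fun y => f y + g y) x = pder i f x + pder i g x := by
  simp only [pder, fderiv_fun_add hf hg, add_apply]

lemma pder_sub (hf : DifferentiableAt ℝ f x) (hg : DifferentiableAt ℝ g x) (i : Fin d) :
    pder i (fun y => f y - g y) x = pder i f x - pder i g x := by
  simp only [pder, fderiv_fun_sub hf hg, sub_apply]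

lemma pder_mul (hf : DifferentiableAt ℝ f x) (hg : DifferentiableAt ℝ g x) (i : Fin d) :
    pder i (fun y => f y * g y) x = f x * pder i g x + pder i f x * g x := by
  simp only [pder, fderiv_fun_mul hf hg, add_apply, smul_apply, smul_eq_mul, mul_comm (g x)]

lemma pder_const_mul (hf : DifferentiableAt ℝ f x) (a : ℝ) (i : Fin d) :
    pder i (fun y => a * f y) x = a * pder i f x := by
  simp only [pder, fderiv_const_mul hf, smul_apply, smul_eq_mul]

lemma pder_sum {ι : Type*} (s : Finset ι) {f : ι → Euc d → ℝ}
    (hf : ∀ j ∈ s, DifferentiableAt ℝ (f j) x) (i : Fin d) :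
    pder i (fun y => ∑ j ∈ s, f j y) x = ∑ j ∈ s, pder i (f j) x := by
  simp only [pder, fderiv_fun_sum hf, _root_.sum_apply]

lemma pder_comp_smul (f : Euc d → ℝ) (a : ℝ) (i : Fin d) :
    pder i (fun x => f (a • x)) = fun x => a * pder i f (a • x) := by
  ext x
  simp only [pder, fderiv_comp_smul, smul_apply, smul_eq_mul]

lemma pder_comp_sub_right (f : Euc d → ℝ) (a : Euc d) (i : Fin d) :
    pder i (fun x => f (x - a)) = fun x => pder i f (x - a) := by
  ext x
  simp only [pder, fderiv_comp_sub]

lemma lap_comp_sub_right (f : Euc d → ℝ) (a : Euc d) :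
    lap (fun x => f (x - a)) = fun x => lap f (x - a) := by
  ext x
  simp only [lap, pder_comp_sub_right]

lemma lap_sub (hf : ContDiffAt ℝ (⊤ : ℕ∞) f x) (hg : ContDiffAt ℝ (⊤ : ℕ∞) g x) :
    lap (fun y => f y - g y) x = lap f x - lap g x := by
  have near : ∀ i, pder i (fun y => f y - g y) =ᶠ[𝓝 x] fun y => pder i f y - pder i g y := by
    intro i
    filter_upwards [eventually_differentiableAt hf, eventually_differentiableAt hg] with y hfy hgy
    exact pder_sub hfy hgy i
  simp only [lap, ← Finset.sum_sub_distrib]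
  refine Finset.sum_congr rfl fun i _ => ?_
  rw [(eventuallyEq_pder (near i) i).eq_of_nhds]
  exact pder_sub (differentiableAt_of_contDiffAt_infty (contDiffAt_pder hf i))
    (differentiableAt_of_contDiffAt_infty (contDiffAt_pder hg i)) i

lemma bilap_comp_sub_right (f : Euc d → ℝ) (a : Euc d) :
    bilap (fun x => f (x - a)) = fun x => bilap f (x - a) := by
  simp only [bilap, lap_comp_sub_right]

lemma bilap_sub (hO : IsOpen O) (hf : ContDiffOn ℝ (⊤ : ℕ∞) f O) (hg : ContDiffOn ℝ (⊤ : ℕ∞) g O)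
    (hx : x ∈ O) : bilap (fun y => f y - g y) x = bilap f x - bilap g x := by
  have near : lap (fun y => f y - g y) =ᶠ[𝓝 x] fun y => lap f y - lap g y := by
    filter_upwards [hO.mem_nhds hx] with y hy
    exact lap_sub (hf.contDiffAt (hO.mem_nhds hy)) (hg.contDiffAt (hO.mem_nhds hy))
  rw [bilap, (eventuallyEq_lap near).eq_of_nhds]
  exact lap_sub ((contDiffOn_lap hO hf).contDiffAt (hO.mem_nhds hx))
    ((contDiffOn_lap hO hg).contDiffAt (hO.mem_nhds hx))

lemma tsupport_pder_subset (f : Euc d → ℝ) (i : Fin d) : tsupport (pder i f) ⊆ tsupport f :=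
  tsupport_fderiv_apply_subset ℝ _

lemma testFun_pder (hf : TestFun f) (i : Fin d) : TestFun (pder i f) :=
  ⟨contDiff_pder hf.1 i, hf.2.fderiv_apply ℝ _⟩

lemma contDiff_of_forall_mem_tsupport (h : ∀ x ∈ tsupport f, ContDiffAt ℝ (⊤ : ℕ∞) f x) :
    ContDiff ℝ (⊤ : ℕ∞) f := by
  refine contDiff_iff_contDiffAt.2 fun x => ?_
  by_cases hx : x ∈ tsupport f
  · exact h x hx
  · exact contDiffAt_const.congr_of_eventuallyEq (notMem_tsupport_iff_eventuallyEq.1 hx)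

lemma testFun_mul (hf : TestFun f) (hO : IsOpen O) (hfO : tsupport f ⊆ O)
    (hg : ContDiffOn ℝ (⊤ : ℕ∞) g O) : TestFun (fun x => f x * g x) := by
  refine ⟨contDiff_of_forall_mem_tsupport fun x hx => ?_, hf.2.mul_right⟩
  exact hf.1.contDiffAt.mul (hg.contDiffAt (hO.mem_nhds (hfO (tsupport_mul_subset_left hx))))

end CoordinateDerivatives

/-! ### Green's identity for the bilaplacian -/

section GreenIdentity

variable {O : Set (Euc d)} {f g u w φ : Euc d → ℝ} {x : Euc d}

lemma integrable_testFun_mul (hf : TestFun f) (hO : IsOpen O) (hfO : tsupport f ⊆ O)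
    (hg : ContDiffOn ℝ (⊤ : ℕ∞) g O) : Integrable fun x => f x * g x :=
  have h := testFun_mul hf hO hfO hg
  h.1.continuous.integrable_of_hasCompactSupport h.2

lemma integral_mul_pder (hf : TestFun f) (hO : IsOpen O) (hfO : tsupport f ⊆ O)
    (hg : ContDiffOn ℝ (⊤ : ℕ∞) g O) (i : Fin d) :
    ∫ x, f x * pder i g x = - ∫ x, pder i f x * g x :=
  integral_mul_fderiv_eq_neg_fderiv_mul_of_integrable
    (integrable_testFun_mul (testFun_pder hf i) hO ((tsupport_pder_subset f i).trans hfO) hg)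
    (integrable_testFun_mul hf hO hfO (contDiffOn_pder hO hg i))
    (integrable_testFun_mul hf hO hfO hg)
    (fun _ _ => differentiable_of_contDiff_infty hf.1 _)
    fun _ hx => differentiableAt_of_contDiffAt_infty (hg.contDiffAt (hO.mem_nhds (hfO hx)))

lemma integral_mul_lap (hf : TestFun f) (hO : IsOpen O) (hfO : tsupport f ⊆ O)
    (hg : ContDiffOn ℝ (⊤ : ℕ∞) g O) :
    ∫ x, f x * lap g x = - ∑ i, ∫ x, pder i f x * pder i g x := by
  have hgi := contDiffOn_pder hO hg
  simp only [lap, Finset.mul_sum]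
  rw [integral_finsetSum _ fun i _ =>
      integrable_testFun_mul hf hO hfO (contDiffOn_pder hO (hgi i) i),
    ← Finset.sum_neg_distrib]
  exact Finset.sum_congr rfl fun i _ => integral_mul_pder hf hO hfO (hgi i) i

lemma integral_mul_lap_comm (hf : TestFun f) (hO : IsOpen O) (hfO : tsupport f ⊆ O)
    (hg : ContDiffOn ℝ (⊤ : ℕ∞) g O) : ∫ x, f x * lap g x = ∫ x, lap f x * g x := by
  have hfi : ∀ i, tsupport (pder i f) ⊆ O := fun i => (tsupport_pder_subset f i).trans hfO
  rw [integral_mul_lap hf hO hfO hg, ← Finset.sum_neg_distrib]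
  simp only [lap, Finset.sum_mul]
  rw [integral_finsetSum _ fun i _ => integrable_testFun_mul (testFun_pder (testFun_pder hf i) i) hO
    ((tsupport_pder_subset _ i).trans (hfi i)) hg]
  refine Finset.sum_congr rfl fun i _ => ?_
  rw [integral_mul_pder (testFun_pder hf i) hO (hfi i) hg, neg_neg]

/-- The pointwise inner product `∇f · ∇g`. -/
def gradDot (f g : Euc d → ℝ) (x : Euc d) : ℝ := ∑ i, pder i f x * pder i g x

/-- The commutator `[Δ, φ]u = Δ(φu) - φΔu = 2∇φ·∇u + uΔφ`. -/
def lapComm (φ u : Euc d → ℝ) (x : Euc d) : ℝ := 2 * gradDot φ u x + u x * lap φ x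

lemma lap_mul (hφ : ContDiffAt ℝ (⊤ : ℕ∞) φ x) (hu : ContDiffAt ℝ (⊤ : ℕ∞) u x) :
    lap (fun y => φ y * u y) x = φ x * lap u x + lapComm φ u x := by
  have diff : ∀ {f : Euc d → ℝ}, ContDiffAt ℝ (⊤ : ℕ∞) f x → DifferentiableAt ℝ f x :=
    differentiableAt_of_contDiffAt_infty
  have near : ∀ i, pder i (fun y => φ y * u y) =ᶠ[𝓝 x]
      fun y => φ y * pder i u y + pder i φ y * u y := by
    intro i
    filter_upwards [eventually_differentiableAt hφ, eventually_differentiableAt hu] with y hφy huy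
    exact pder_mul hφy huy i
  have second : ∀ i, pder i (pder i fun y => φ y * u y) x =
      φ x * pder i (pder i u) x + (2 * (pder i φ x * pder i u x) + u x * pder i (pder i φ) x) := by
    intro i
    have hφi := contDiffAt_pder hφ i
    have hui := contDiffAt_pder hu i
    rw [(eventuallyEq_pder (near i) i).eq_of_nhds,
      pder_add (diff (hφ.mul hui)) (diff (hφi.mul hu)), pder_mul (diff hφ) (diff hui),
      pder_mul (diff hφi) (diff hu)]
    ring
  simp only [lap, second, lapComm, gradDot, Finset.sum_add_distrib, Finset.mul_sum]

lemma lapComm_eq_zero {a : ℝ} (h : φ =ᶠ[𝓝 x] fun _ => a) (u : Euc d → ℝ) :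
    lapComm φ u x = 0 := by
  simp [lapComm, gradDot, (eventuallyEq_lap h).eq_of_nhds,
    fun i => (eventuallyEq_pder h i).eq_of_nhds]

lemma tsupport_lapComm_subset (φ u : Euc d → ℝ) : tsupport (lapComm φ u) ⊆ tsupport φ :=
  closure_minimal (fun _ hx => by_contra fun h =>
    hx (lapComm_eq_zero (notMem_tsupport_iff_eventuallyEq.1 h) u)) (isClosed_tsupport φ)

lemma testFun_lapComm (hφ : TestFun φ) (hO : IsOpen O) (hφO : tsupport φ ⊆ O)
    (hu : ContDiffOn ℝ (⊤ : ℕ∞) u O) : TestFun (lapComm φ u) := by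
  have hsub := tsupport_lapComm_subset φ u
  refine ⟨contDiff_of_forall_mem_tsupport fun x hx => ?_,
    hφ.2.of_isClosed_subset (isClosed_tsupport _) hsub⟩
  have hux := hu.contDiffAt (hO.mem_nhds (hφO (hsub hx)))
  exact (contDiffAt_const.mul (ContDiffAt.sum fun i _ =>
    (contDiff_pder hφ.1 i).contDiffAt.mul (contDiffAt_pder hux i))).add
    (hux.mul (contDiff_lap hφ.1).contDiffAt)

/-- The density which Green's second identity for `Δ²`, localized by `φ`, leaves behind. It
contains at most one derivative of `w` and two of `u`, and it vanishes where `φ` is locally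
constant. -/
def greenDensity (φ u w : Euc d → ℝ) (x : Euc d) : ℝ :=
  gradDot (lapComm φ u) w x + lapComm φ w x * lap u x

lemma greenDensity_eq_zero {a : ℝ} (h : φ =ᶠ[𝓝 x] fun _ => a) (u w : Euc d → ℝ) :
    greenDensity φ u w x = 0 := by
  have hS : lapComm φ u =ᶠ[𝓝 x] fun _ => 0 := by
    filter_upwards [eventually_eventually_nhds.2 h] with y hy using lapComm_eq_zero hy u
  simp [greenDensity, gradDot, lapComm_eq_zero h, fun i => (eventuallyEq_pder hS i).eq_of_nhds]

lemma integral_mul_lap_lap (hφ : TestFun φ) (hO : IsOpen O) (hφO : tsupport φ ⊆ O)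
    (hu : ContDiffOn ℝ (⊤ : ℕ∞) u O) (hg : ContDiffOn ℝ (⊤ : ℕ∞) g O) :
    ∫ x, φ x * u x * lap g x = ∫ x, (φ x * (lap u x * g x) + lapComm φ u x * g x) := by
  rw [integral_mul_lap_comm (testFun_mul hφ hO hφO hu) hO (tsupport_mul_subset_left.trans hφO) hg]
  refine integral_congr_ae (Eventually.of_forall fun x => ?_)
  by_cases hx : x ∈ O
  · simp only [lap_mul hφ.1.contDiffAt (hu.contDiffAt (hO.mem_nhds hx))]
    ring
  · have hφx : φ =ᶠ[𝓝 x] fun _ => 0 := notMem_tsupport_iff_eventuallyEq.1 fun h => hx (hφO h)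
    have hφu : (fun y => φ y * u y) =ᶠ[𝓝 x] fun _ => 0 := hφx.mono fun y hy => by simp [hy]
    simp [(eventuallyEq_lap hφu).eq_of_nhds, lapComm_eq_zero hφx, hφx.eq_of_nhds]

theorem integral_mul_bilap_sub (hφ : TestFun φ) (hO : IsOpen O) (hφO : tsupport φ ⊆ O)
    (hu : ContDiffOn ℝ (⊤ : ℕ∞) u O) (hw : ContDiffOn ℝ (⊤ : ℕ∞) w O) :
    ∫ x, φ x * (u x * bilap w x - w x * bilap u x) = - ∫ x, greenDensity φ u w x := by
  have hΔu := contDiffOn_lap hO hu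
  have hΔw := contDiffOn_lap hO hw
  have hS := testFun_lapComm hφ hO hφO hu
  have hT := testFun_lapComm hφ hO hφO hw
  have hSO := (tsupport_lapComm_subset φ u).trans hφO
  have hTO := (tsupport_lapComm_subset φ w).trans hφO
  have split : ∫ x, φ x * (u x * bilap w x - w x * bilap u x) =
      (∫ x, lapComm φ u x * lap w x) - ∫ x, lapComm φ w x * lap u x := by
    calc ∫ x, φ x * (u x * bilap w x - w x * bilap u x)
        = (∫ x, φ x * u x * lap (lap w) x) - ∫ x, φ x * w x * lap (lap u) x := by
          rw [← integral_sub]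
          · simp only [bilap, mul_sub, mul_assoc]
          · simpa only [mul_assoc] using
              integrable_testFun_mul hφ hO hφO (hu.mul (contDiffOn_lap hO hΔw))
          · simpa only [mul_assoc] using
              integrable_testFun_mul hφ hO hφO (hw.mul (contDiffOn_lap hO hΔu))
      _ = _ := by
          rw [integral_mul_lap_lap hφ hO hφO hu hΔw, integral_mul_lap_lap hφ hO hφO hw hΔu,
            integral_add (integrable_testFun_mul hφ hO hφO (hΔu.mul hΔw))
              (integrable_testFun_mul hS hO hSO hΔw),
            integral_add (integrable_testFun_mul hφ hO hφO (hΔw.mul hΔu))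
              (integrable_testFun_mul hT hO hTO hΔu)]
          simp only [mul_comm (lap w _)]
          ring
  have hSw : ∀ i, Integrable fun x => pder i (lapComm φ u) x * pder i w x := fun i =>
    integrable_testFun_mul (testFun_pder hS i) hO ((tsupport_pder_subset _ i).trans hSO)
      (contDiffOn_pder hO hw i)
  simp only [split, integral_mul_lap hS hO hSO hw, greenDensity, gradDot]
  rw [integral_add (integrable_finsetSum _ fun i _ => hSw i)
    (integrable_testFun_mul hT hO hTO hΔu), integral_finsetSum _ fun i _ => hSw i]
  ring

end GreenIdentity

/-! ### Radial functions and the fundamental solution -/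

section Radial

variable {f g : ℝ → ℝ} {a b e s t : ℝ}

/-- The Laplacian acting on the profiles `g` of radial functions `x ↦ g (‖x‖²)`. -/
def radLap (d : ℕ) (g : ℝ → ℝ) (s : ℝ) : ℝ := 2 * d * deriv g s + 4 * s * deriv (deriv g) s

lemma contDiff_radLap (d : ℕ) (hg : ContDiff ℝ (⊤ : ℕ∞) g) :
    ContDiff ℝ (⊤ : ℕ∞) (radLap d g) :=
  (contDiff_const.mul (hg.iterate_deriv 1)).add
    ((contDiff_const.mul contDiff_id).mul (hg.iterate_deriv 2))

lemma eventuallyEq_radLap (d : ℕ) (h : f =ᶠ[𝓝 s] g) : radLap d f =ᶠ[𝓝 s] radLap d g := by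
  filter_upwards [h.deriv, h.deriv.deriv] with t h1 h2
  simp only [radLap, h1, h2]

lemma radLap_add (hf : ContDiff ℝ (⊤ : ℕ∞) f) (hg : ContDiff ℝ (⊤ : ℕ∞) g) :
    radLap d (fun s => f s + g s) = fun s => radLap d f s + radLap d g s := by
  have diff : ∀ {h : ℝ → ℝ}, ContDiff ℝ (⊤ : ℕ∞) h → Differentiable ℝ h :=
    fun h => h.differentiable (by simp)
  have first : deriv (fun s => f s + g s) = fun s => deriv f s + deriv g s :=
    funext fun s => deriv_fun_add (diff hf s) (diff hg s)
  have hf' : Differentiable ℝ (deriv f) := diff (hf.iterate_deriv 1)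
  have hg' : Differentiable ℝ (deriv g) := diff (hg.iterate_deriv 1)
  ext s
  simp only [radLap, first, deriv_fun_add (hf' s) (hg' s)]
  ring

lemma radLap_const_mul_comp_mul (A m : ℝ) (g : ℝ → ℝ) :
    radLap d (fun s => A * g (s * m)) = fun s => A * m * radLap d g (s * m) := by
  have chain : ∀ (h : ℝ → ℝ) (B : ℝ),
      deriv (fun s => B * h (s * m)) = fun s => B * m * deriv h (s * m) := by
    intro h B
    ext s
    simp only [deriv_const_mul_field, mul_comm s m, mul_comm _ m, deriv_comp_mul_left, smul_eq_mul]
    ring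
  ext s
  simp only [radLap, chain]
  ring

lemma radLap_radLap_const_mul_pow (B : ℝ) {k : ℕ} (hk : k ≤ 1) :
    radLap d (radLap d fun s => B * s ^ k) = fun _ => 0 := by
  have hr : radLap d (fun s => B * s ^ k) = fun _ => 2 * d * (B * k) := by
    ext s
    interval_cases k <;> simp [radLap]
  ext s
  simp [hr, radLap]

lemma hasFDerivAt_normSq_comp (hg : Differentiable ℝ g) (x : Euc d) :
    HasFDerivAt (fun y : Euc d => g (‖y‖ ^ 2))
      (deriv g (‖x‖ ^ 2) • (2 • innerSL ℝ x : Euc d →L[ℝ] ℝ)) x :=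
  (hg _).hasDerivAt.comp_hasFDerivAt x (hasStrictFDerivAt_norm_sq x).hasFDerivAt

lemma pder_normSq_comp (hg : Differentiable ℝ g) (i : Fin d) :
    pder i (fun y => g (‖y‖ ^ 2)) = fun x => 2 * x i * deriv g (‖x‖ ^ 2) := by
  ext x
  simp [pder, (hasFDerivAt_normSq_comp hg x).fderiv, EuclideanSpace.inner_single_right]
  ring

lemma pder_coord (i : Fin d) (x : Euc d) : pder i (fun y => y i) x = 1 := by
  have hproj : HasFDerivAt (fun y : Euc d => y i) (EuclideanSpace.proj i : Euc d →L[ℝ] ℝ) x :=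
    (EuclideanSpace.proj i : Euc d →L[ℝ] ℝ).hasFDerivAt
  simp [pder, hproj.fderiv]

lemma lap_normSq_comp (hg : ContDiff ℝ (⊤ : ℕ∞) g) :
    lap (fun y : Euc d => g (‖y‖ ^ 2)) = fun x => radLap d g (‖x‖ ^ 2) := by
  have hg' : Differentiable ℝ (deriv g) := (hg.iterate_deriv 1).differentiable (by simp)
  ext x
  have second : ∀ i : Fin d, pder i (pder i fun y : Euc d => g (‖y‖ ^ 2)) x =
      2 * deriv g (‖x‖ ^ 2) + 4 * deriv (deriv g) (‖x‖ ^ 2) * x i ^ 2 := fun i => by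
    have hcoord : DifferentiableAt ℝ (fun y : Euc d => y i) x :=
      (EuclideanSpace.proj (𝕜 := ℝ) i : Euc d →L[ℝ] ℝ).differentiableAt
    rw [pder_normSq_comp (hg.differentiable (by simp)), pder_mul (hcoord.const_mul 2)
      (hasFDerivAt_normSq_comp hg' x).differentiableAt, pder_normSq_comp hg',
      pder_const_mul hcoord, pder_coord]
    ring
  simp only [lap, second, Finset.sum_add_distrib, ← Finset.mul_sum,
    ← EuclideanSpace.real_norm_sq_eq, radLap, Finset.sum_const, Finset.card_univ, Fintype.card_fin,
    nsmul_eq_mul]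
  ring

lemma bilap_normSq_comp (hg : ContDiff ℝ (⊤ : ℕ∞) g) :
    bilap (fun y : Euc d => g (‖y‖ ^ 2)) = fun x => radLap d (radLap d g) (‖x‖ ^ 2) := by
  rw [bilap, lap_normSq_comp hg, lap_normSq_comp (contDiff_radLap d hg)]

lemma hasDerivAt_radial_flux (hd : 1 ≤ d) (hg : ContDiff ℝ (⊤ : ℕ∞) g) (r : ℝ) :
    HasDerivAt (fun r => 2 * r ^ d * deriv g (r ^ 2)) (r ^ (d - 1) * radLap d g (r ^ 2)) r := by
  have hg' : Differentiable ℝ (deriv g) := (hg.iterate_deriv 1).differentiable (by simp)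
  have inner : HasDerivAt (fun r : ℝ => deriv g (r ^ 2)) (deriv (deriv g) (r ^ 2) * (2 * r)) r := by
    simpa [Function.comp_def] using (hg' (r ^ 2)).hasDerivAt.comp r (hasDerivAt_pow 2 r)
  refine (((hasDerivAt_pow d r).const_mul 2).mul inner).congr_deriv ?_
  obtain ⟨n, rfl⟩ : ∃ n, d = n + 1 := ⟨d - 1, by omega⟩
  simp only [radLap, Nat.add_sub_cancel]
  push_cast
  ring

lemma integral_radLap_normSq (hd : 1 ≤ d) (hg : ContDiff ℝ (⊤ : ℕ∞) g)
    (hzero : ∀ s ≥ 1, radLap d g s = 0) :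
    ∫ x : Euc d, radLap d g (‖x‖ ^ 2) = d * volume.real (ball (0 : Euc d) 1) * (2 * deriv g 1) := by
  have : Nonempty (Fin d) := ⟨⟨0, hd⟩⟩
  have radial : ∫ r in Ioi (0 : ℝ), r ^ (d - 1) * radLap d g (r ^ 2) =
      ∫ r in (0 : ℝ)..1, r ^ (d - 1) * radLap d g (r ^ 2) := by
    rw [intervalIntegral.integral_of_le zero_le_one]
    refine setIntegral_eq_of_subset_of_forall_sdiff_eq_zero measurableSet_Ioi
      Ioc_subset_Ioi_self fun r hr => ?_
    have hr1 : 1 < r := not_le.1 fun h => hr.2 ⟨hr.1, h⟩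
    rw [hzero _ (by nlinarith), mul_zero]
  have flux : ∫ r in (0 : ℝ)..1, r ^ (d - 1) * radLap d g (r ^ 2) = 2 * deriv g 1 := by
    rw [intervalIntegral.integral_eq_sub_of_hasDerivAt fun r _ => hasDerivAt_radial_flux hd hg r]
    · simp [Nat.ne_of_gt hd]
    · exact (((continuous_pow _).mul ((contDiff_radLap d hg).continuous.comp
        (continuous_pow 2))).intervalIntegrable _ _)
  rw [integral_fun_norm_addHaar volume fun r => radLap d g (r ^ 2)]
  simp only [finrank_euclideanSpace, Fintype.card_fin, nsmul_eq_mul, smul_eq_mul, radial, flux,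
    mul_assoc]

lemma exists_contDiff_eqOn_Ioi (hab : a < b) (hf : ContDiffOn ℝ (⊤ : ℕ∞) f (Ioi a)) :
    ∃ g : ℝ → ℝ, ContDiff ℝ (⊤ : ℕ∞) g ∧ EqOn g f (Ioi b) := by
  obtain ⟨m, ham, hmb⟩ := exists_between hab
  refine ⟨fun s => Real.smoothTransition ((s - m) / (b - m)) * f s,
    contDiff_iff_contDiffAt.2 fun s => ?_, fun s hs => ?_⟩
  · rcases lt_or_ge a s with has | hsa
    · exact (Real.smoothTransition.contDiff.comp (by fun_prop : ContDiff ℝ (⊤ : ℕ∞)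
        fun s : ℝ => (s - m) / (b - m))).contDiffAt.mul (hf.contDiffAt (Ioi_mem_nhds has))
    · refine contDiffAt_const (c := (0 : ℝ)).congr_of_eventuallyEq ?_
      filter_upwards [Iio_mem_nhds (hsa.trans_lt ham)] with t ht
      rw [Real.smoothTransition.zero_of_nonpos (div_nonpos_of_nonpos_of_nonneg
        (sub_nonpos.2 ht.le) (sub_nonneg.2 hmb.le)), zero_mul]
  · have hs1 : 1 ≤ (s - m) / (b - m) := by
      rw [one_le_div (sub_pos.2 hmb)]
      exact sub_le_sub_right (le_of_lt hs) m
    simp only [Real.smoothTransition.one_of_one_le hs1, one_mul]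

/-- The functions `s ^ a (b log s + e)`, closed under differentiation on `(0, ∞)`; they contain
the profiles of the fundamental solutions in all dimensions. -/
def powLog (a b e s : ℝ) : ℝ := s ^ a * (b * Real.log s + e)

lemma hasDerivAt_powLog (a b e : ℝ) (hs : 0 < s) :
    HasDerivAt (powLog a b e) (powLog (a - 1) (a * b) (a * e + b) s) s := by
  refine ((Real.hasDerivAt_rpow_const (Or.inl hs.ne')).mul
    (((Real.hasDerivAt_log hs.ne').const_mul b).add_const e)).congr_deriv ?_
  rw [powLog, Real.rpow_sub_one hs.ne']
  field_simp
  ring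

lemma contDiffOn_powLog (a b e : ℝ) : ContDiffOn ℝ (⊤ : ℕ∞) (powLog a b e) (Ioi 0) := by
  intro s hs
  exact ((Real.contDiffAt_rpow_const_of_ne (ne_of_gt hs)).mul ((contDiffAt_const.mul
    (Real.contDiffAt_log.2 (ne_of_gt hs))).add contDiffAt_const)).contDiffWithinAt

lemma deriv_powLog_eventuallyEq (a b e : ℝ) (hs : 0 < s) :
    deriv (powLog a b e) =ᶠ[𝓝 s] powLog (a - 1) (a * b) (a * e + b) := by
  filter_upwards [Ioi_mem_nhds hs] with t ht using (hasDerivAt_powLog a b e ht).deriv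

lemma radLap_powLog (a b e : ℝ) (hs : 0 < s) :
    radLap d (powLog a b e) s = powLog (a - 1) (a * b * (2 * d + 4 * a - 4))
      ((a * e + b) * (2 * d + 4 * a - 4) + 4 * a * b) s := by
  rw [radLap, (deriv_powLog_eventuallyEq a b e hs).deriv_eq,
    (deriv_powLog_eventuallyEq a b e hs).eq_of_nhds, (hasDerivAt_powLog _ _ _ hs).deriv]
  have hpow : s ^ (a - 1) = s * s ^ (a - 1 - 1) := by
    rw [Real.rpow_sub_one hs.ne' (a - 1)]
    field_simp
  simp only [powLog, hpow]
  ring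

lemma radLap_powLog_eventuallyEq (a b e : ℝ) (hs : 0 < s) :
    radLap d (powLog a b e) =ᶠ[𝓝 s] powLog (a - 1) (a * b * (2 * d + 4 * a - 4))
      ((a * e + b) * (2 * d + 4 * a - 4) + 4 * a * b) := by
  filter_upwards [Ioi_mem_nhds hs] with t ht using radLap_powLog a b e ht

lemma radLap_radLap_powLog (hda : (d : ℝ) = 4 - 2 * a) (hb : a * (a - 1) * b = 0) (hs : 0 < s) :
    radLap d (radLap d (powLog a b e)) s = 0 := by
  rw [(eventuallyEq_radLap d (radLap_powLog_eventuallyEq a b e hs)).eq_of_nhds,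
    radLap_powLog _ _ _ hs, hda, powLog]
  linear_combination 16 * s ^ (a - 1 - 1) * hb

lemma deriv_radLap_powLog_one (hda : (d : ℝ) = 4 - 2 * a) :
    deriv (radLap d (powLog a b e)) 1 = 4 * (a * (a - 1) * (e + b) + (2 * a - 1) * b) := by
  rw [(radLap_powLog_eventuallyEq a b e one_pos).deriv_eq,
    (hasDerivAt_powLog _ _ _ one_pos).deriv, hda, powLog]
  simp only [Real.one_rpow, Real.log_one]
  ring

lemma powLog_mul (a b e : ℝ) {m : ℝ} (ht : 0 < t) (hm : 0 < m) :
    powLog a b e (t * m) = m ^ a * (powLog a b e t + b * Real.log m * t ^ a) := by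
  rw [powLog, powLog, Real.mul_rpow ht.le hm.le, Real.log_mul ht.ne' hm.ne']
  ring

lemma exists_fundSol_eq_powLog (d : ℕ) {c : ℝ} (hc : c ≠ 0) :
    ∃ a b e : ℝ, (d : ℝ) = 4 - 2 * a ∧ (∀ x, fundSol d c x = powLog a b e (‖x‖ ^ 2)) ∧
      (∃ k ≤ 1, b = 0 ∨ a = (k : ℕ)) ∧ a * (a - 1) * (e + b) + (2 * a - 1) * b ≠ 0 := by
  have hpow : ∀ x : Euc d, (‖x‖ ^ 2) ^ (((4 : ℝ) - d) / 2) = ‖x‖ ^ ((4 : ℝ) - d) := fun x => by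
    rw [← Real.rpow_natCast, ← Real.rpow_mul (norm_nonneg _)]
    congr 1
    push_cast
    ring
  by_cases h : d = 2 ∨ d = 4
  · refine ⟨((4 : ℝ) - d) / 2, c / 2, 0, by ring, fun x => ?_, ?_, ?_⟩
    · simp only [fundSol, powLog, h, if_true, hpow, Real.log_pow]
      push_cast
      ring
    · rcases h with rfl | rfl
      exacts [⟨1, le_rfl, Or.inr (by norm_num)⟩, ⟨0, zero_le_one, Or.inr (by norm_num)⟩]
    · rcases h with rfl | rfl <;> norm_num [hc]
  · refine ⟨((4 : ℝ) - d) / 2, 0, c, by ring, fun x => ?_, ⟨0, zero_le_one, Or.inl rfl⟩, ?_⟩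
    · simp only [fundSol, powLog, h, if_false, hpow]
      ring
    · obtain ⟨h2, h4⟩ := not_or.1 h
      have h2' : (d : ℝ) ≠ 2 := by exact_mod_cast h2
      have h4' : (d : ℝ) ≠ 4 := by exact_mod_cast h4
      simp only [add_zero, mul_zero]
      refine mul_ne_zero (mul_ne_zero (fun ha => h4' ?_) fun ha => h2' ?_) hc <;> linarith

/-- The rescaled profile is `m ^ (-a) g (m s)`, up to a polynomial of degree at most one in `s`,
which `radLap`² annihilates. -/
lemma exists_rescaled_profile {k : ℕ} (hk : k ≤ 1) (hak : b = 0 ∨ a = k)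
    (hg : ContDiff ℝ (⊤ : ℕ∞) g) (hgΓ : ∀ s ≥ 1, g s = powLog a b e s) {m : ℝ} (hm : 0 < m) :
    ∃ G : ℝ → ℝ, ContDiff ℝ (⊤ : ℕ∞) G ∧ (∀ s, 1 ≤ s * m → G s = powLog a b e s) ∧
      ∃ A ≠ 0, ∀ s, radLap d (radLap d G) s = A * radLap d (radLap d g) (s * m) := by
  have hma : m ^ a ≠ 0 := (Real.rpow_pos_of_pos hm a).ne'
  have hscale : ∀ {f : ℝ → ℝ} (A : ℝ), ContDiff ℝ (⊤ : ℕ∞) f →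
      ContDiff ℝ (⊤ : ℕ∞) fun s => A * f (s * m) :=
    fun _ hf => contDiff_const.mul (hf.comp (contDiff_id.mul contDiff_const))
  have hpoly : ContDiff ℝ (⊤ : ℕ∞) fun s : ℝ => -(b * Real.log m) * s ^ k := by fun_prop
  refine ⟨fun s => (m ^ a)⁻¹ * g (s * m) + -(b * Real.log m) * s ^ k,
    (hscale _ hg).add hpoly, fun s hs => ?_, (m ^ a)⁻¹ * m * m, by positivity, fun s => ?_⟩
  · have hs0 : 0 < s := pos_of_mul_pos_left (one_pos.trans_le hs) hm.le
    have hbk : b * s ^ a = b * s ^ k := by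
      rcases hak with rfl | rfl
      · simp
      · rw [Real.rpow_natCast]
    simp only [hgΓ _ hs, powLog_mul a b e hs0 hm]
    rw [inv_mul_cancel_left₀ hma]
    linear_combination Real.log m * hbk
  · rw [radLap_add (hscale _ hg) hpoly, radLap_const_mul_comp_mul,
      radLap_add (hscale _ (contDiff_radLap d hg)) (contDiff_radLap d hpoly),
      radLap_const_mul_comp_mul, radLap_radLap_const_mul_pow _ hk]
    exact add_zero _

/-- The identity `Γ(y) = ε ^ (4 - d) Γ(y / ε) + β ‖y‖ ^ (2k)` off `B(0, ε)`, with `Γ` smoothed at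
the origin on the right, gives regularizations whose bilaplacians are dilates of one kernel: the
correction is biharmonic as `k ≤ 1`. -/
theorem exists_regularized_fundSol (hd : 1 ≤ d) {c : ℝ} (hc : c ≠ 0) :
    ∃ K : Euc d → ℝ, Continuous K ∧ (∀ y, 1 ≤ ‖y‖ → K y = 0) ∧ ∫ y, K y ≠ 0 ∧
      ∀ ε > 0, ∃ E : Euc d → ℝ, ContDiff ℝ (⊤ : ℕ∞) E ∧
        (∀ y, ε ≤ ‖y‖ → E y = fundSol d c y) ∧ ∃ A ≠ 0, ∀ y, bilap E y = A * K (ε⁻¹ • y) := by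
  obtain ⟨a, b, e, hda, hΓ, ⟨k, hk, hak⟩, hflux⟩ := exists_fundSol_eq_powLog d hc
  obtain ⟨g, hg, hgΓ⟩ := exists_contDiff_eqOn_Ioi one_half_pos (contDiffOn_powLog a b e)
  have hb : a * (a - 1) * b = 0 := by
    rcases hak with rfl | rfl
    · ring
    · interval_cases k <;> simp
  have near : ∀ s ≥ 1, g =ᶠ[𝓝 s] powLog a b e := fun s hs =>
    hgΓ.eventuallyEq_of_mem (Ioi_mem_nhds (by linarith))
  have hg1 := contDiff_radLap d hg
  have hzero : ∀ s ≥ 1, radLap d (radLap d g) s = 0 := fun s hs => by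
    rw [(eventuallyEq_radLap d (eventuallyEq_radLap d (near s hs))).eq_of_nhds,
      radLap_radLap_powLog hda hb (one_pos.trans_le hs)]
  refine ⟨fun y => radLap d (radLap d g) (‖y‖ ^ 2), ?_, ?_, ?_, fun ε hε => ?_⟩
  · exact (contDiff_radLap d hg1).continuous.comp (continuous_norm.pow 2)
  · exact fun y hy => hzero _ (one_le_pow₀ hy)
  · rw [integral_radLap_normSq hd hg1 hzero, (eventuallyEq_radLap d (near 1 le_rfl)).deriv_eq,
      deriv_radLap_powLog_one hda]
    have hball : 0 < volume.real (ball (0 : Euc d) 1) :=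
      ENNReal.toReal_pos (measure_ball_pos _ _ one_pos).ne' measure_ball_lt_top.ne
    simp [hball.ne', hflux, Nat.ne_of_gt hd]
  · obtain ⟨G, hG, hGΓ, A, hA, hGbilap⟩ := exists_rescaled_profile (d := d) hk hak hg
      (fun s hs => (near s hs).eq_of_nhds) (inv_pos.2 (pow_pos hε 2))
    refine ⟨fun y => G (‖y‖ ^ 2), hG.comp (contDiff_norm_sq ℝ), fun y hy => ?_, A, hA, fun y => ?_⟩
    · rw [hΓ]
      refine hGΓ _ ?_
      rw [← div_eq_mul_inv, one_le_div (pow_pos hε 2)]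
      gcongr
    · simp only [bilap_normSq_comp hG, hGbilap, norm_smul, norm_inv, Real.norm_of_nonneg hε.le,
        mul_pow, inv_pow, mul_comm (‖y‖ ^ 2)]

end Radial

/-! ### Boundary charts -/

section GraphCoordinates

/-- The point of `ℝ^d` with given horizontal and vertical coordinates. -/
def ofCoords (d : ℕ) (p : Euc (d - 1) × ℝ) : Euc d :=
  WithLp.toLp 2 fun i => if h : (i : ℕ) < d - 1 then p.1 ⟨i, h⟩ else p.2

lemma graphCoord_ofCoords (p : Euc (d - 1) × ℝ) : graphCoord d (ofCoords d p) = p.1 := by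
  ext i
  simp [graphCoord, ofCoords]

lemma vertCoord_ofCoords (hd : 1 ≤ d) (p : Euc (d - 1) × ℝ) :
    vertCoord d (ofCoords d p) = p.2 := by
  simp [vertCoord, ofCoords, Nat.pos_of_ne_zero (Nat.ne_of_gt hd)]

lemma ofCoords_graphCoord_vertCoord (hd : 1 ≤ d) (x : Euc d) :
    ofCoords d (graphCoord d x, vertCoord d x) = x := by
  ext i
  by_cases h : (i : ℕ) < d - 1
  · simp [graphCoord, ofCoords, h]
  · have hi : i = ⟨d - 1, Nat.sub_lt (by omega) one_pos⟩ := Fin.ext (by simp; omega)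
    simp [vertCoord, ofCoords, show 0 < d by omega, hi]

lemma ofCoords_add (hd : 1 ≤ d) (x : Euc (d - 1)) (s t : ℝ) :
    ofCoords d (x, s + t) = ofCoords d (x, s) + t • vertDir d := by
  ext i
  by_cases h : (i : ℕ) < d - 1
  · have hi : i ≠ ⟨d - 1, Nat.sub_lt hd one_pos⟩ := fun e => by simp [e] at h
    simp [ofCoords, vertDir, h, hi, show 0 < d by omega]
  · have hi : i = ⟨d - 1, Nat.sub_lt (by omega) one_pos⟩ := Fin.ext (by simp; omega)
    simp [ofCoords, vertDir, show 0 < d by omega, hi]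

lemma norm_vertDir (hd : 1 ≤ d) : ‖vertDir d‖ = 1 := by
  simp [vertDir, show 0 < d by omega]

lemma dist_sq_eq_graphCoord_add_vertCoord (hd : 1 ≤ d) (x y : Euc d) :
    dist x y ^ 2 = dist (graphCoord d x) (graphCoord d y) ^ 2 +
      dist (vertCoord d x) (vertCoord d y) ^ 2 := by
  obtain ⟨n, rfl⟩ : ∃ n, d = n + 1 := ⟨d - 1, by omega⟩
  rw [EuclideanSpace.dist_eq, EuclideanSpace.dist_eq, Real.sq_sqrt (by positivity),
    Real.sq_sqrt (by positivity), Fin.sum_univ_castSucc]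
  simp [graphCoord, vertCoord]
  rfl

lemma lipschitzWith_graphCoord (hd : 1 ≤ d) : LipschitzWith 1 (graphCoord d) :=
  LipschitzWith.mk_one fun x y => le_of_sq_le_sq
    (by rw [dist_sq_eq_graphCoord_add_vertCoord hd]; exact le_add_of_nonneg_right (sq_nonneg _))
    dist_nonneg

lemma lipschitzWith_vertCoord (hd : 1 ≤ d) : LipschitzWith 1 (vertCoord d) :=
  LipschitzWith.mk_one fun x y => le_of_sq_le_sq
    (by rw [dist_sq_eq_graphCoord_add_vertCoord hd]; exact le_add_of_nonneg_left (sq_nonneg _))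
    dist_nonneg

lemma continuous_ofCoords : Continuous (ofCoords d) := by
  refine (PiLp.continuous_toLp 2 _).comp (continuous_pi fun i => ?_)
  by_cases h : (i : ℕ) < d - 1 <;> simp only [h, dite_true, dite_false] <;> fun_prop

lemma measurePreserving_ofCoords (hd : 1 ≤ d) : MeasurePreserving (ofCoords d) := by
  obtain ⟨n, rfl⟩ : ∃ n, d = n + 1 := ⟨d - 1, by omega⟩
  have swap : MeasurePreserving (Prod.swap : Euc n × ℝ → ℝ × Euc n) :=
    Measure.measurePreserving_swap
  have unpack : MeasurePreserving (Prod.map id WithLp.ofLp : ℝ × Euc n → ℝ × (Fin n → ℝ)) :=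
    (MeasurePreserving.id _).prod (PiLp.volume_preserving_ofLp (Fin n))
  have insert := (volume_preserving_piFinSuccAbove (fun _ : Fin (n + 1) => ℝ) (Fin.last n)).symm
  have hcomp : ofCoords (n + 1) = WithLp.toLp 2 ∘
      ((MeasurableEquiv.piFinSuccAbove (fun _ : Fin (n + 1) => ℝ) (Fin.last n)).symm ∘
        (Prod.map id WithLp.ofLp ∘ Prod.swap)) := by
    funext p
    ext i
    refine Fin.lastCases ?_ (fun j => ?_) i
    · simp [ofCoords, MeasurableEquiv.piFinSuccAbove]
    · simp [ofCoords, MeasurableEquiv.piFinSuccAbove, Fin.insertNthEquiv, Fin.snoc]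
  rw [hcomp]
  exact (PiLp.volume_preserving_toLp (Fin (n + 1))).comp (insert.comp (unpack.comp swap))

lemma exists_linearIsometryEquiv_add (R : Euc d ≃ᵢ Euc d) :
    ∃ L : Euc d ≃ₗᵢ[ℝ] Euc d, ∀ x v, R (x + v) = R x + L v := by
  refine ⟨R.toRealAffineIsometryEquiv.linearIsometryEquiv, fun x v => ?_⟩
  have h := R.toRealAffineIsometryEquiv.map_vadd x v
  rwa [vadd_eq_add, vadd_eq_add, add_comm v, add_comm _ (R.toRealAffineIsometryEquiv x)] at h

lemma measurePreserving_isometryEquiv (R : Euc d ≃ᵢ Euc d) : MeasurePreserving R := by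
  obtain ⟨L, hL⟩ := exists_linearIsometryEquiv_add R
  have hR : (R : Euc d → Euc d) = (fun y => R 0 + y) ∘ L := funext fun x => by simpa using hL 0 x
  rw [hR]
  exact (measurePreserving_add_left volume (R 0)).comp L.measurePreserving

variable {R : Euc d ≃ᵢ Euc d} {η : Euc (d - 1) → ℝ} {M : ℝ≥0}

/-- The coordinates of `ℝ^d` that flatten the graph of `η` in the frame given by the rigid
motion `R`: the pair `(x, t)` is sent to the point at height `t` above the graph over `x`. -/
def graphHomeomorph (hd : 1 ≤ d) (R : Euc d ≃ᵢ Euc d) (hη : Continuous η) :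
    Euc (d - 1) × ℝ ≃ₜ Euc d where
  toFun p := R.symm (ofCoords d (p.1, η p.1 + p.2))
  invFun x := (graphCoord d (R x), vertCoord d (R x) - η (graphCoord d (R x)))
  left_inv p := by simp [graphCoord_ofCoords, vertCoord_ofCoords hd]
  right_inv x := by simp [ofCoords_graphCoord_vertCoord hd]
  continuous_toFun := R.symm.continuous.comp (continuous_ofCoords.comp (by fun_prop))
  continuous_invFun := by
    have hg := (lipschitzWith_graphCoord hd).continuous.comp R.continuous
    have hv := (lipschitzWith_vertCoord hd).continuous.comp R.continuous
    exact hg.prodMk (hv.sub (hη.comp hg))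

lemma measurePreserving_graphHomeomorph (hd : 1 ≤ d) (R : Euc d ≃ᵢ Euc d) (hη : Continuous η) :
    MeasurePreserving (graphHomeomorph hd R hη) := by
  have shear : MeasurePreserving fun p : Euc (d - 1) × ℝ => (p.1, η p.1 + p.2) :=
    (MeasurePreserving.id volume).skew_product (g := fun x t => η x + t) (μc := volume)
      (by unfold Function.uncurry; fun_prop)
      (ae_of_all _ fun x => (measurePreserving_add_left volume (η x)).map_eq)
  exact (measurePreserving_isometryEquiv R.symm).comp ((measurePreserving_ofCoords hd).comp shear)

lemma exists_graphHomeomorph_eq_add_smul (hd : 1 ≤ d) (R : Euc d ≃ᵢ Euc d) (hη : Continuous η) :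
    ∃ v : Euc d, ‖v‖ = 1 ∧ ∀ x t,
      graphHomeomorph hd R hη (x, t) = graphHomeomorph hd R hη (x, 0) + t • v := by
  obtain ⟨L, hL⟩ := exists_linearIsometryEquiv_add R.symm
  refine ⟨L (vertDir d), by rw [L.norm_map, norm_vertDir hd], fun x t => ?_⟩
  change R.symm (ofCoords d (x, η x + t)) = R.symm (ofCoords d (x, η x + 0)) + _
  rw [add_zero, ofCoords_add hd, hL, map_smul]

lemma lipschitzWith_graphHomeomorph_symm_fst (hd : 1 ≤ d) (hη : Continuous η) :
    LipschitzWith 1 fun x => ((graphHomeomorph hd R hη).symm x).1 :=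
  ((lipschitzWith_graphCoord hd).comp R.isometry.lipschitz).weaken (one_mul 1).le

lemma lipschitzWith_graphHomeomorph_symm_snd (hd : 1 ≤ d) (hη : LipschitzWith M η) :
    LipschitzWith (1 + M) fun x => ((graphHomeomorph hd R hη.continuous).symm x).2 := by
  have hv : LipschitzWith 1 fun x => vertCoord d (R x) :=
    ((lipschitzWith_vertCoord hd).comp R.isometry.lipschitz).weaken (one_mul 1).le
  have hg : LipschitzWith M fun x => η (graphCoord d (R x)) :=
    (hη.comp ((lipschitzWith_graphCoord hd).comp R.isometry.lipschitz)).weaken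
      (by rw [one_mul, mul_one])
  exact hv.sub hg

lemma lipschitzWith_graphHomeomorph_zero (hd : 1 ≤ d) (hη : LipschitzWith M η) :
    LipschitzWith (1 + M) fun x => graphHomeomorph hd R hη.continuous (x, 0) := by
  refine LipschitzWith.of_dist_le_mul fun x y => ?_
  change dist (R.symm (ofCoords d (x, η x + 0))) (R.symm (ofCoords d (y, η y + 0))) ≤ _
  have hηxy := pow_le_pow_left₀ dist_nonneg (hη.dist_le_mul x y) 2
  rw [R.symm.isometry.dist_eq, add_zero, add_zero]
  refine le_of_sq_le_sq ?_ (by positivity)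
  rw [dist_sq_eq_graphCoord_add_vertCoord hd, graphCoord_ofCoords, graphCoord_ofCoords,
    vertCoord_ofCoords hd, vertCoord_ofCoords hd]
  refine (add_le_add_right hηxy _).trans ?_
  push_cast
  nlinarith [mul_nonneg M.coe_nonneg (sq_nonneg (dist x y))]

end GraphCoordinates

/-- Coordinates near a boundary point in which `∂Ω` is flat. Membership in `Ω` and `∂Ω` is
controlled over a ball of twice the radius of the base, which leaves room for dilations. -/
structure GraphChart (Ω : Set (Euc d)) where
  /-- The flattening coordinates: `map (x, t)` lies at height `t` above the point over `x`. -/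
  map : Euc (d - 1) × ℝ ≃ₜ Euc d
  /-- The vertical direction. -/
  dir : Euc d
  /-- The centre of the base. -/
  center : Euc (d - 1)
  /-- The radius of the base. -/
  radius : ℝ
  /-- The height of the cylinder. -/
  height : ℝ
  /-- The Lipschitz constant of the boundary parametrization. -/
  lip : ℝ≥0
  radius_pos : 0 < radius
  height_pos : 0 < height
  one_le_lip : 1 ≤ lip
  norm_dir : ‖dir‖ = 1
  measurePreserving_map : MeasurePreserving map
  map_eq_add_smul : ∀ x t, map (x, t) = map (x, 0) + t • dir
  lipschitzWith_map_zero : LipschitzWith lip fun x => map (x, 0)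
  lipschitzWith_symm_fst : LipschitzWith 1 fun y => (map.symm y).1
  mem_iff : ∀ x ∈ ball center (2 * radius), ∀ t ∈ Ioo (-height) height,
    (map (x, t) ∈ Ω ↔ 0 < t)
  mem_frontier_iff : ∀ x ∈ ball center (2 * radius), ∀ t ∈ Ioo (-height) height,
    (map (x, t) ∈ frontier Ω ↔ t = 0)
  le_mul_infDist : ∀ x ∈ ball center (2 * radius), ∀ t ∈ Ioo (-height) height,
    t ≤ lip * infDist (map (x, t)) (frontier Ω)

namespace GraphChart

variable (κ : GraphChart Ω)

/-- The part of space covered by a chart. -/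
def cyl : Set (Euc d) :=
  κ.map '' (ball κ.center κ.radius ×ˢ Ioo (-κ.height) κ.height)

lemma isOpen_cyl : IsOpen κ.cyl := κ.map.isOpenMap _ (isOpen_ball.prod isOpen_Ioo)

lemma ball_subset_ball_two_mul : ball κ.center κ.radius ⊆ ball κ.center (2 * κ.radius) :=
  ball_subset_ball (by linarith [κ.radius_pos])

lemma exists_eq_map_zero {P : Euc d} (hP : P ∈ frontier Ω) (hc : P ∈ κ.cyl) :
    ∃ x ∈ ball κ.center κ.radius, P = κ.map (x, 0) := by
  obtain ⟨⟨x, t⟩, ⟨hx, ht⟩, rfl⟩ := hc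
  rw [(κ.mem_frontier_iff x (κ.ball_subset_ball_two_mul hx) t ht).1 hP]
  exact ⟨x, hx, rfl⟩

end GraphChart

lemma exists_cylinder_subset_preimage_ball (Φ : Euc (d - 1) × ℝ ≃ₜ Euc d) (p : Euc (d - 1) × ℝ)
    {ρ : ℝ} (hρ : 0 < ρ) :
    ∃ r > 0, ∀ x ∈ ball p.1 (2 * (r / 2)), ∀ t ∈ ball p.2 r, Φ (x, t) ∈ ball (Φ p) ρ := by
  obtain ⟨r, hr, hsub⟩ := Metric.mem_nhds_iff.1
    (Φ.continuous.continuousAt.preimage_mem_nhds (ball_mem_nhds (Φ p) hρ))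
  refine ⟨r, hr, fun x hx t ht => hsub ?_⟩
  rw [mul_div_cancel₀ r two_ne_zero] at hx
  exact ball_prod_same p.1 p.2 r ▸ ⟨hx, ht⟩

namespace IsLipschitzDomain

lemma frontier_nonempty (hd : 1 ≤ d) (hΩ : IsLipschitzDomain Ω) : (frontier Ω).Nonempty := by
  have : Nonempty (Fin d) := ⟨⟨0, hd⟩⟩
  refine nonempty_frontier_iff.2 ⟨hΩ.2.2.1.nonempty, fun h => ?_⟩
  exact NormedSpace.unbounded_univ ℝ (Euc d) (h ▸ hΩ.2.1)

lemma isCompact_frontier (hΩ : IsLipschitzDomain Ω) : IsCompact (frontier Ω) :=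
  Metric.isCompact_of_isClosed_isBounded isClosed_frontier
    (hΩ.2.1.closure.subset frontier_subset_closure)

lemma exists_graphHomeomorph (hd : 1 ≤ d) (hΩ : IsLipschitzDomain Ω) {Q : Euc d}
    (hQ : Q ∈ frontier Ω) :
    ∃ U ∈ 𝓝 Q, ∃ (R : Euc d ≃ᵢ Euc d) (M : ℝ≥0) (η : Euc (d - 1) → ℝ) (hη : LipschitzWith M η),
      ∀ x ∈ U, (x ∈ Ω ↔ 0 < ((graphHomeomorph hd R hη.continuous).symm x).2) ∧
        (x ∈ frontier Ω ↔ ((graphHomeomorph hd R hη.continuous).symm x).2 = 0) := by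
  obtain ⟨-, -, -, N, U, hU, hcov, hch⟩ := hΩ
  obtain ⟨i, hi⟩ := mem_iUnion.1 (hcov hQ)
  obtain ⟨R, M, η, hη, hin, hfr⟩ := hch i
  refine ⟨U i, (hU i).mem_nhds hi, R, M, η, hη, fun x hx => ⟨?_, ?_⟩⟩
  · refine Iff.trans ?_ sub_pos.symm
    simpa [hx] using congrArg (x ∈ ·) hin
  · refine Iff.trans ?_ sub_eq_zero.symm
    simpa [hx] using congrArg (x ∈ ·) hfr

lemma exists_graphChart (hd : 1 ≤ d) (hΩ : IsLipschitzDomain Ω) {Q : Euc d}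
    (hQ : Q ∈ frontier Ω) : ∃ κ : GraphChart Ω, Q ∈ κ.cyl := by
  obtain ⟨U, hU, R, M, η, hη, hmem⟩ := hΩ.exists_graphHomeomorph hd hQ
  obtain ⟨ρ, hρ, hball⟩ := Metric.mem_nhds_iff.1 hU
  set Φ := graphHomeomorph hd R hη.continuous with hΦ
  obtain ⟨v, hv, hΦv⟩ := exists_graphHomeomorph_eq_add_smul hd R hη.continuous
  have hQ0 : (Φ.symm Q).2 = 0 := (hmem Q (mem_of_mem_nhds hU)).2.1 hQ
  obtain ⟨r, hr, hsub⟩ := exists_cylinder_subset_preimage_ball Φ (Φ.symm Q) (half_pos hρ)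
  rw [hQ0, Real.ball_eq_Ioo, zero_sub, zero_add, Φ.apply_symm_apply] at hsub
  have hinU : ∀ x ∈ ball (Φ.symm Q).1 (2 * (r / 2)), ∀ t ∈ Ioo (-r) r, Φ (x, t) ∈ U :=
    fun x hx t ht => hball (ball_subset_ball (by linarith) (hsub x hx t ht))
  refine ⟨{ map := Φ, dir := v, center := (Φ.symm Q).1, radius := r / 2, height := r,
            lip := 1 + M, radius_pos := half_pos hr, height_pos := hr,
            one_le_lip := le_self_add, norm_dir := hv,
            measurePreserving_map := measurePreserving_graphHomeomorph hd R hη.continuous,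
            map_eq_add_smul := hΦv
            lipschitzWith_map_zero := lipschitzWith_graphHomeomorph_zero hd hη
            lipschitzWith_symm_fst := lipschitzWith_graphHomeomorph_symm_fst hd hη.continuous
            mem_iff := fun x hx t ht => by
              rw [(hmem _ (hinU x hx t ht)).1, Φ.symm_apply_apply]
            mem_frontier_iff := fun x hx t ht => by
              rw [(hmem _ (hinU x hx t ht)).2, Φ.symm_apply_apply]
            le_mul_infDist := fun x hx t ht => ?_ }, ?_⟩
  · obtain ⟨P, hP, hPd⟩ := isClosed_frontier.exists_infDist_eq_dist ⟨Q, hQ⟩ (Φ (x, t))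
    have hPQ : dist (Φ (x, t)) P ≤ dist (Φ (x, t)) Q := hPd ▸ infDist_le_dist_of_mem hQ
    have hPU : P ∈ U := hball (by
      have hΦQ := mem_ball.1 (hsub x hx t ht)
      rw [mem_ball]
      linarith [dist_triangle_left P Q (Φ (x, t))])
    have hlip := (lipschitzWith_graphHomeomorph_symm_snd (R := R) hd hη).dist_le_mul (Φ (x, t)) P
    rw [← hΦ, Φ.symm_apply_apply, (hmem P hPU).2.1 hP, dist_zero_right, ← hPd] at hlip
    exact (le_abs_self t).trans hlip
  · exact ⟨Φ.symm Q, ⟨mem_ball_self (half_pos hr), by rw [hQ0]; exact ⟨neg_lt_zero.2 hr, hr⟩⟩,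
      Φ.apply_symm_apply Q⟩

lemma exists_charts (hd : 1 ≤ d) (hΩ : IsLipschitzDomain Ω) :
    ∃ (s : Finset (GraphChart Ω)) (δ Λ : ℝ), 0 < δ ∧ 1 ≤ Λ ∧
      (∀ κ ∈ s, δ ≤ κ.radius ∧ δ ≤ κ.height ∧ κ.lip ≤ Λ) ∧
      ∀ x, infDist x (frontier Ω) < δ → ∃ κ ∈ s, x ∈ κ.cyl := by
  obtain ⟨s, hs⟩ := hΩ.isCompact_frontier.elim_finite_subcover
    (fun κ : GraphChart Ω => κ.cyl) (fun κ => κ.isOpen_cyl)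
    (fun Q hQ => mem_iUnion.2 (hΩ.exists_graphChart hd hQ))
  obtain ⟨ε, hε, hsub⟩ := hΩ.isCompact_frontier.exists_thickening_subset_open
    (isOpen_biUnion fun κ _ => κ.isOpen_cyl) hs
  have hsmall : ∀ᶠ δ in 𝓝[>] (0 : ℝ), ∀ κ ∈ s, δ ≤ κ.radius ∧ δ ≤ κ.height := by
    refine (eventually_all_finset s).2 fun κ _ => ?_
    filter_upwards [Ioc_mem_nhdsGT κ.radius_pos, Ioc_mem_nhdsGT κ.height_pos] with δ hr hh
      using ⟨hr.2, hh.2⟩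
  obtain ⟨δ, hδs, hδ, hδε⟩ := (hsmall.and (Ioc_mem_nhdsGT hε)).exists
  obtain ⟨Λ, hΛs, hΛ⟩ := (((eventually_all_finset s).2 fun κ _ =>
    eventually_ge_atTop (κ.lip : ℝ)).and (eventually_ge_atTop 1)).exists
  refine ⟨s, δ, Λ, hδ, hΛ, fun κ hκ => ⟨(hδs κ hκ).1, (hδs κ hκ).2, hΛs κ hκ⟩, fun x hx => ?_⟩
  obtain ⟨P, hP, hPd⟩ := (infDist_lt_iff (hΩ.frontier_nonempty hd)).1 hx
  simpa using hsub (mem_thickening_iff.2 ⟨P, hP, hPd.trans_le hδε⟩)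

end IsLipschitzDomain

/-! ### Surface measure and collars -/

lemma isAddHaarMeasure_hausdorffMeasure_sub_one (hd : 1 ≤ d) :
    (μH[(d : ℝ) - 1] : Measure (Euc (d - 1))).IsAddHaarMeasure := by
  have h := MeasureTheory.isAddHaarMeasure_hausdorffMeasure (E := Euc (d - 1))
  rwa [finrank_euclideanSpace_fin, Nat.cast_sub hd, Nat.cast_one] at h

lemma natCast_sub_one_nonneg (hd : 1 ≤ d) : (0 : ℝ) ≤ d - 1 := sub_nonneg.2 (Nat.one_le_cast.2 hd)

lemma ae_mem_frontier (Ω : Set (Euc d)) : ∀ᵐ Q ∂(sMeasure Ω), Q ∈ frontier Ω :=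
  ae_restrict_mem isClosed_frontier.measurableSet

namespace GraphChart

variable (κ : GraphChart Ω)

lemma map_zero_mem_frontier {x : Euc (d - 1)} (hx : x ∈ ball κ.center (2 * κ.radius)) :
    κ.map (x, 0) ∈ frontier Ω :=
  (κ.mem_frontier_iff x hx 0 ⟨neg_lt_zero.2 κ.height_pos, κ.height_pos⟩).2 rfl

lemma ball_subset_image_ball_inter_frontier {x : Euc (d - 1)} (hx : x ∈ ball κ.center κ.radius)
    {r : ℝ} (hr : r ≤ κ.radius) :
    ball x (r / κ.lip) ⊆ (fun y => (κ.map.symm y).1) '' (ball (κ.map (x, 0)) r ∩ frontier Ω) := by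
  have hlip : (1 : ℝ) ≤ κ.lip := κ.one_le_lip
  intro y hy
  rw [mem_ball, lt_div_iff₀' (by linarith)] at hy
  refine ⟨κ.map (y, 0), ⟨?_, κ.map_zero_mem_frontier ?_⟩, by simp⟩
  · exact (κ.lipschitzWith_map_zero.dist_le_mul y x).trans_lt hy
  · rw [mem_ball] at hx ⊢
    nlinarith [dist_triangle y x κ.center, dist_nonneg (x := y) (y := x)]

lemma hausdorffMeasure_ball_le (hd : 1 ≤ d) {x : Euc (d - 1)} (hx : x ∈ ball κ.center κ.radius)
    {r : ℝ} (hr : r ≤ κ.radius) :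
    μH[(d : ℝ) - 1] (ball x (r / κ.lip)) ≤ sMeasure Ω (ball (κ.map (x, 0)) r) := by
  refine (measure_mono (κ.ball_subset_image_ball_inter_frontier hx hr)).trans ?_
  rw [sMeasure, Measure.restrict_apply isOpen_ball.measurableSet]
  simpa using κ.lipschitzWith_symm_fst.hausdorffMeasure_image_le (natCast_sub_one_nonneg hd)
    (ball (κ.map (x, 0)) r ∩ frontier Ω)

end GraphChart

lemma tendsto_const_mul_nhdsGT_zero {c : ℝ} (hc : 0 < c) :
    Tendsto (c * ·) (𝓝[>] 0) (𝓝[>] 0) := by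
  simpa using TendstoNhdsWithinIoi.const_mul hc (tendsto_id (x := 𝓝[>] (0 : ℝ)))

namespace IsLipschitzDomain

lemma isFiniteMeasure (hd : 1 ≤ d) (hΩ : IsLipschitzDomain Ω) :
    IsFiniteMeasure (sMeasure Ω) := by
  obtain ⟨s, δ, -, hδ, -, -, hs⟩ := hΩ.exists_charts hd
  have := isAddHaarMeasure_hausdorffMeasure_sub_one hd
  have hd' := natCast_sub_one_nonneg hd
  have hsub : frontier Ω ⊆ ⋃ κ ∈ s, (fun x => κ.map (x, 0)) '' ball κ.center κ.radius := by
    intro P hP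
    obtain ⟨κ, hκ, hPκ⟩ := hs P (by rwa [infDist_zero_of_mem hP])
    obtain ⟨x, hx, rfl⟩ := κ.exists_eq_map_zero hP hPκ
    exact mem_biUnion hκ ⟨x, hx, rfl⟩
  rw [sMeasure, isFiniteMeasure_restrict]
  refine ((measure_mono hsub).trans_lt ((measure_biUnion_finset_le _ _).trans_lt ?_)).ne
  refine ENNReal.sum_lt_top.2 fun κ _ => ?_
  exact (κ.lipschitzWith_map_zero.hausdorffMeasure_image_le hd' _).trans_lt
    (ENNReal.mul_lt_top (ENNReal.rpow_lt_top_of_nonneg hd' ENNReal.coe_ne_top)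
      measure_ball_lt_top)

lemma exists_le_sMeasure_ball (hd : 1 ≤ d) (hΩ : IsLipschitzDomain Ω) :
    ∃ c > 0, ∃ δ > 0, ∀ P ∈ frontier Ω, ∀ r, 0 < r → r ≤ δ →
      ENNReal.ofReal (c * r ^ (d - 1)) ≤ sMeasure Ω (ball P r) := by
  obtain ⟨s, δ, Λ, hδ, hΛ, hs, hcov⟩ := hΩ.exists_charts hd
  have := isAddHaarMeasure_hausdorffMeasure_sub_one hd
  set m : ℝ := (μH[(d : ℝ) - 1] : Measure (Euc (d - 1))).real (ball 0 1) with hm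
  have hm0 : 0 < m := ENNReal.toReal_pos (measure_ball_pos _ _ one_pos).ne' measure_ball_lt_top.ne
  have : 0 < Λ := by linarith
  refine ⟨m / Λ ^ (d - 1), by positivity, δ, hδ, fun P hP r hr hrδ => ?_⟩
  obtain ⟨κ, hκ, hPκ⟩ := hcov P (by rwa [infDist_zero_of_mem hP])
  obtain ⟨x, hx, rfl⟩ := κ.exists_eq_map_zero hP hPκ
  have hlip : (0 : ℝ) < κ.lip := zero_lt_one.trans_le κ.one_le_lip
  calc ENNReal.ofReal (m / Λ ^ (d - 1) * r ^ (d - 1))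
      = (μH[(d : ℝ) - 1] : Measure (Euc (d - 1))) (ball x (r / Λ)) := by
        rw [Measure.addHaar_ball_of_pos _ _ (by positivity), finrank_euclideanSpace_fin,
          show m / Λ ^ (d - 1) * r ^ (d - 1) = (r / Λ) ^ (d - 1) * m by rw [div_pow]; ring,
          ENNReal.ofReal_mul (by positivity), hm, ofReal_measureReal measure_ball_lt_top.ne]
    _ ≤ μH[(d : ℝ) - 1] (ball x (r / κ.lip)) :=
        measure_mono (ball_subset_ball (div_le_div_of_nonneg_left hr.le hlip (hs κ hκ).2.2))
    _ ≤ _ := κ.hausdorffMeasure_ball_le hd hx (hrδ.trans (hs κ hκ).1)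

end IsLipschitzDomain

lemma integrableOn_ball_inv_norm_pow (hd : 1 ≤ d) (r : ℝ) :
    IntegrableOn (fun x : Euc d => (‖x‖ ^ (d - 1))⁻¹) (ball 0 r) := by
  have : Nonempty (Fin d) := ⟨⟨0, hd⟩⟩
  refine (integrableOn_fun_norm_addHaar volume (f := fun t => (t ^ (d - 1))⁻¹)).2 ?_
  rw [finrank_euclideanSpace_fin]
  exact (integrableOn_congr_fun (f := fun _ => (1 : ℝ))
    (fun t ht => (mul_inv_cancel₀ (pow_ne_zero _ ht.1.ne')).symm) measurableSet_Ioo).1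
      (integrableOn_const (by simp))

lemma integral_ball_inv_norm_pow (hd : 1 ≤ d) {r : ℝ} (hr : 0 ≤ r) :
    ∫ x in ball (0 : Euc d) r, (‖x‖ ^ (d - 1))⁻¹ = d * volume.real (ball (0 : Euc d) 1) * r := by
  have : Nonempty (Fin d) := ⟨⟨0, hd⟩⟩
  have hradial : ∫ t in Ioi (0 : ℝ), t ^ (d - 1) • (Iio r).indicator (fun t => (t ^ (d - 1))⁻¹) t =
      ∫ t in Ioi (0 : ℝ), (Ioo 0 r).indicator (fun _ => (1 : ℝ)) t := by
    refine setIntegral_congr_fun measurableSet_Ioi fun t (ht : 0 < t) => ?_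
    by_cases htr : t < r
    · simp [htr, ht, ht.ne']
    · simp [htr]
  have hpolar := integral_fun_norm_addHaar (volume : Measure (Euc d))
    ((Iio r).indicator fun t => (t ^ (d - 1))⁻¹)
  rw [finrank_euclideanSpace_fin, hradial, setIntegral_indicator measurableSet_Ioo,
    inter_eq_right.2 Ioo_subset_Ioi_self] at hpolar
  rw [← integral_indicator isOpen_ball.measurableSet]
  convert hpolar using 2
  · ext x
    simp [indicator]
  · simp [hr, mul_assoc]

/-- The kernel `|x - Q|^{1-d}` cut off to `|x - Q| < r`. -/
def truncRiesz (r : ℝ) (x Q : Euc d) : ℝ≥0∞ :=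
  (ball Q r).indicator (fun y => ENNReal.ofReal (‖y - Q‖ ^ (d - 1))⁻¹) x

lemma measurable_truncRiesz (r : ℝ) : Measurable (Function.uncurry (truncRiesz (d := d) r)) := by
  change Measurable ({z : Euc d × Euc d | dist z.1 z.2 < r}.indicator
    fun z => ENNReal.ofReal (‖z.1 - z.2‖ ^ (d - 1))⁻¹)
  exact Measurable.indicator (by fun_prop) (measurableSet_lt (by fun_prop) (by fun_prop))

lemma lintegral_truncRiesz (hd : 1 ≤ d) {r : ℝ} (hr : 0 ≤ r) (Q : Euc d) :
    ∫⁻ x, truncRiesz r x Q = ENNReal.ofReal (d * volume.real (ball (0 : Euc d) 1) * r) := by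
  have htrans : ∀ x, truncRiesz r x Q = truncRiesz r (x - Q) 0 := fun x => by
    simp [truncRiesz, indicator, dist_eq_norm]
  simp only [htrans, lintegral_sub_right_eq_self fun x => truncRiesz r x 0]
  rw [← integral_ball_inv_norm_pow hd hr, ofReal_integral_eq_lintegral_ofReal
    (integrableOn_ball_inv_norm_pow hd r) (ae_of_all _ fun x => by positivity),
    ← lintegral_indicator isOpen_ball.measurableSet]
  simp [truncRiesz]

lemma lintegral_lintegral_mul_truncRiesz (hd : 1 ≤ d) {r : ℝ} (hr : 0 ≤ r)
    {μ : Measure (Euc d)} [SFinite μ] {f : Euc d → ℝ≥0∞} (hf : Measurable f) :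
    ∫⁻ x, ∫⁻ Q, f Q * truncRiesz r x Q ∂μ =
      ENNReal.ofReal (d * volume.real (ball (0 : Euc d) 1) * r) * ∫⁻ Q, f Q ∂μ := by
  have hK := measurable_truncRiesz (d := d) r
  have hinner : ∀ Q, ∫⁻ x, f Q * truncRiesz r x Q =
      f Q * ENNReal.ofReal (d * volume.real (ball (0 : Euc d) 1) * r) := fun Q => by
    have hKQ : Measurable fun x => truncRiesz r x Q := hK.of_uncurry_right
    rw [lintegral_const_mul _ hKQ, lintegral_truncRiesz hd hr]
  rw [lintegral_lintegral_swap ((hf.comp measurable_snd).mul hK).aemeasurable]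
  simp only [hinner]
  rw [lintegral_mul_const _ hf, mul_comm]

/-- The part of `Ω` at distance less than `δ` from the boundary. -/
def collar (Ω : Set (Euc d)) (δ : ℝ) : Set (Euc d) := {x | x ∈ Ω ∧ infDist x (frontier Ω) < δ}

/-- The nontangential maximal function of a nonnegative function, truncated at distance `δ`. -/
def truncMax (Ω : Set (Euc d)) (δ : ℝ) (h : Euc d → ℝ≥0∞) (Q : Euc d) : ℝ≥0∞ :=
  ⨆ x ∈ ntCone Ω Q ∩ ball Q δ, h x

lemma collar_subset (Ω : Set (Euc d)) (δ : ℝ) : collar Ω δ ⊆ Ω := fun _ hx => hx.1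

lemma collar_mono (Ω : Set (Euc d)) : Monotone (collar Ω) :=
  fun _ _ h _ hx => ⟨hx.1, hx.2.trans_le h⟩

lemma measurableSet_collar (hΩ : IsOpen Ω) (δ : ℝ) : MeasurableSet (collar Ω δ) :=
  hΩ.measurableSet.inter (measurableSet_lt measurable_infDist measurable_const)

lemma infDist_frontier_pos (hΩ : IsOpen Ω) (hne : (frontier Ω).Nonempty) {x : Euc d}
    (hx : x ∈ Ω) : 0 < infDist x (frontier Ω) := by
  rw [← isClosed_frontier.notMem_iff_infDist_pos hne]
  exact fun h => (hΩ.frontier_eq ▸ h).2 hx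

lemma truncMax_le (Ω : Set (Euc d)) (δ : ℝ) (h : Euc d → ℝ≥0∞) (Q : Euc d) :
    truncMax Ω δ h Q ≤ ⨆ x ∈ ntCone Ω Q, h x :=
  biSup_mono fun _ hx => hx.1

lemma measurable_truncMax (Ω : Set (Euc d)) (δ : ℝ) (h : Euc d → ℝ≥0∞) :
    Measurable (truncMax Ω δ h) := by
  refine measurable_of_Ioi fun a => IsOpen.measurableSet ?_
  have hpre : truncMax Ω δ h ⁻¹' Ioi a = ⋃ x ∈ {x | x ∈ Ω ∧ a < h x},
      ball x (2 * infDist x (frontier Ω)) ∩ ball x δ := by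
    ext Q
    simp only [truncMax, mem_preimage, mem_Ioi, lt_iSup_iff, mem_inter_iff, ntCone, mem_ofPred_eq,
      mem_iUnion, exists_prop, mem_ball, dist_comm Q]
    tauto
  rw [hpre]
  exact isOpen_biUnion fun x _ => isOpen_ball.inter isOpen_ball

lemma tendsto_truncMax_zero {h : Euc d → ℝ≥0∞} {Q : Euc d}
    (hlim : Tendsto h (𝓝[ntCone Ω Q] Q) (𝓝 0)) :
    Tendsto (fun δ => truncMax Ω δ h Q) (𝓝[>] 0) (𝓝 0) := by
  refine ENNReal.tendsto_nhds_zero.2 fun ε hε => ?_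
  obtain ⟨r, hr, hrε⟩ := Metric.mem_nhdsWithin_iff.1 (hlim.eventually (gt_mem_nhds hε))
  filter_upwards [Ioc_mem_nhdsGT hr] with δ hδ
  exact iSup₂_le fun x hx => le_of_lt (hrε ⟨ball_subset_ball hδ.2 hx.2, hx.1⟩)

namespace IsLipschitzDomain

lemma exists_one_le_mul_lintegral_inv_norm_pow (hd : 1 ≤ d) (hΩ : IsLipschitzDomain Ω) :
    ∃ C : ℝ≥0, ∃ δ₀ > 0, ∀ x ∈ collar Ω δ₀, 1 ≤ C * ∫⁻ Q in ball x (2 * infDist x (frontier Ω)),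
      ENNReal.ofReal (‖x - Q‖ ^ (d - 1))⁻¹ ∂(sMeasure Ω) := by
  obtain ⟨c, hc, δ₀, hδ₀, hball⟩ := hΩ.exists_le_sMeasure_ball hd
  have hne := hΩ.frontier_nonempty hd
  refine ⟨(2 ^ (d - 1) / c).toNNReal, δ₀, hδ₀, fun x ⟨hxΩ, hxδ⟩ => ?_⟩
  set ρ := infDist x (frontier Ω)
  have hρ : 0 < ρ := infDist_frontier_pos hΩ.1 hne hxΩ
  obtain ⟨P, hP, hPd⟩ := isClosed_frontier.exists_infDist_eq_dist hne x
  have hsub : ball P ρ ⊆ ball x (2 * ρ) :=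
    ball_subset_ball' (by rw [dist_comm, ← hPd, two_mul])
  have hkernel : ∀ᵐ Q ∂(sMeasure Ω), Q ∈ ball x (2 * ρ) →
      ENNReal.ofReal ((2 * ρ) ^ (d - 1))⁻¹ ≤ ENNReal.ofReal (‖x - Q‖ ^ (d - 1))⁻¹ := by
    filter_upwards [ae_mem_frontier Ω] with Q hQf hQ
    have hpos : 0 < ‖x - Q‖ := by
      rw [← dist_eq_norm]
      exact hρ.trans_le (infDist_le_dist_of_mem hQf)
    rw [mem_ball', dist_eq_norm] at hQ
    gcongr
  calc (1 : ℝ≥0∞)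
      = ENNReal.ofReal (2 ^ (d - 1) / c) *
          (ENNReal.ofReal ((2 * ρ) ^ (d - 1))⁻¹ * ENNReal.ofReal (c * ρ ^ (d - 1))) := by
        rw [← ENNReal.ofReal_mul (by positivity), ← ENNReal.ofReal_mul (by positivity),
          ← ENNReal.ofReal_one, mul_pow]
        congr 1
        field_simp
    _ ≤ ENNReal.ofReal (2 ^ (d - 1) / c) *
          (ENNReal.ofReal ((2 * ρ) ^ (d - 1))⁻¹ * sMeasure Ω (ball x (2 * ρ))) := by
        gcongr
        exact (hball P hP ρ hρ hxδ.le).trans (measure_mono hsub)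
    _ ≤ _ := by
        rw [← setLIntegral_const]
        exact mul_le_mul_right
          (setLIntegral_mono_ae' isOpen_ball.measurableSet hkernel) _

lemma exists_le_mul_lintegral_truncMax_mul_truncRiesz (hd : 1 ≤ d) (hΩ : IsLipschitzDomain Ω) :
    ∃ C : ℝ≥0, ∀ᶠ δ in 𝓝[>] 0, ∀ h : Euc d → ℝ≥0∞, ∀ x ∈ collar Ω δ,
      h x ≤ C * ∫⁻ Q, truncMax Ω (2 * δ) h Q * truncRiesz (2 * δ) x Q ∂(sMeasure Ω) := by
  obtain ⟨C, δ₀, hδ₀, hC⟩ := hΩ.exists_one_le_mul_lintegral_inv_norm_pow hd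
  refine ⟨C, ?_⟩
  filter_upwards [Ioc_mem_nhdsGT hδ₀] with δ hδ h x hx
  set ρ := infDist x (frontier Ω)
  have hρδ : 2 * ρ ≤ 2 * δ := by linarith [hx.2]
  calc h x ≤ h x * (C * ∫⁻ Q in ball x (2 * ρ), ENNReal.ofReal (‖x - Q‖ ^ (d - 1))⁻¹
          ∂(sMeasure Ω)) := le_mul_of_one_le_right' (hC x (collar_mono Ω hδ.2 hx))
    _ = C * ∫⁻ Q in ball x (2 * ρ), h x * ENNReal.ofReal (‖x - Q‖ ^ (d - 1))⁻¹
          ∂(sMeasure Ω) := by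
        rw [lintegral_const_mul _ (by fun_prop), mul_left_comm]
    _ ≤ C * ∫⁻ Q in ball x (2 * ρ), truncMax Ω (2 * δ) h Q * truncRiesz (2 * δ) x Q
          ∂(sMeasure Ω) := by
        refine mul_le_mul_right (setLIntegral_mono' isOpen_ball.measurableSet fun Q hQ => ?_) _
        rw [mem_ball'] at hQ
        have hxQ : x ∈ ball Q (2 * δ) := hQ.trans_le hρδ
        rw [truncRiesz, indicator_of_mem hxQ]
        exact mul_le_mul_left (le_iSup₂ (f := fun x _ => h x) x ⟨⟨hx.1, hQ⟩, hxQ⟩) _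
    _ ≤ _ := mul_le_mul_right (setLIntegral_le_lintegral _ _) _

lemma exists_lintegral_collar_le (hd : 1 ≤ d) (hΩ : IsLipschitzDomain Ω) :
    ∃ C : ℝ≥0, ∀ᶠ δ in 𝓝[>] 0, ∀ h : Euc d → ℝ≥0∞,
      ∫⁻ x in collar Ω δ, h x ≤
        C * ENNReal.ofReal δ * ∫⁻ Q, truncMax Ω (2 * δ) h Q ∂(sMeasure Ω) := by
  obtain ⟨C, hC⟩ := hΩ.exists_le_mul_lintegral_truncMax_mul_truncRiesz hd
  have := hΩ.isFiniteMeasure hd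
  refine ⟨C * (d * volume.real (ball (0 : Euc d) 1) * 2).toNNReal, ?_⟩
  filter_upwards [hC, self_mem_nhdsWithin] with δ hδ (hδ0 : 0 < δ) h
  calc ∫⁻ x in collar Ω δ, h x
      ≤ ∫⁻ x in collar Ω δ, C *
          ∫⁻ Q, truncMax Ω (2 * δ) h Q * truncRiesz (2 * δ) x Q ∂(sMeasure Ω) :=
        setLIntegral_mono' (measurableSet_collar hΩ.1 δ) (hδ h)
    _ ≤ ∫⁻ x, C * ∫⁻ Q, truncMax Ω (2 * δ) h Q * truncRiesz (2 * δ) x Q ∂(sMeasure Ω) :=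
        setLIntegral_le_lintegral _ _
    _ = C * (ENNReal.ofReal (d * volume.real (ball (0 : Euc d) 1) * (2 * δ)) *
          ∫⁻ Q, truncMax Ω (2 * δ) h Q ∂(sMeasure Ω)) := by
        rw [lintegral_const_mul' _ _ ENNReal.coe_ne_top,
          lintegral_lintegral_mul_truncRiesz hd (by positivity) (measurable_truncMax Ω (2 * δ) h)]
    _ = _ := by
        rw [← mul_assoc _ 2 δ, ENNReal.ofReal_mul (by positivity), ENNReal.coe_mul,
          ENNReal.ofNNReal_toNNReal]
        ring

lemma eventually_lintegral_collar_le (hd : 1 ≤ d) (hΩ : IsLipschitzDomain Ω) {h : Euc d → ℝ≥0∞}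
    (hlim : ∀ᵐ Q ∂(sMeasure Ω), Tendsto h (𝓝[ntCone Ω Q] Q) (𝓝 0))
    (hmax : ∫⁻ Q, (⨆ x ∈ ntCone Ω Q, h x) ∂(sMeasure Ω) ≠ ∞) {ε : ℝ≥0∞} (hε : ε ≠ 0) :
    ∀ᶠ δ in 𝓝[>] 0, ∫⁻ x in collar Ω δ, h x ≤ ε * ENNReal.ofReal δ := by
  obtain ⟨C, hC⟩ := hΩ.exists_lintegral_collar_le hd
  have htend : Tendsto (fun δ => ∫⁻ Q, truncMax Ω δ h Q ∂(sMeasure Ω)) (𝓝[>] 0)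
      (𝓝 (∫⁻ _, 0 ∂(sMeasure Ω))) := by
    refine tendsto_lintegral_filter_of_dominated_convergence (fun Q => ⨆ x ∈ ntCone Ω Q, h x)
      (Eventually.of_forall fun δ => measurable_truncMax Ω δ h)
      (Eventually.of_forall fun δ => ae_of_all _ (truncMax_le Ω δ h)) hmax ?_
    filter_upwards [hlim] with Q hQ using tendsto_truncMax_zero hQ
  rw [lintegral_zero] at htend
  have hε' : 0 < ε / (C + 1) := ENNReal.div_pos hε (by simp)
  filter_upwards [hC, (htend.comp (tendsto_const_mul_nhdsGT_zero two_pos)).eventually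
    (gt_mem_nhds hε')] with δ hCδ hδ
  calc ∫⁻ x in collar Ω δ, h x
      ≤ C * ENNReal.ofReal δ * ∫⁻ Q, truncMax Ω (2 * δ) h Q ∂(sMeasure Ω) := hCδ h
    _ ≤ (C + 1) * ENNReal.ofReal δ * (ε / (C + 1)) := by
        gcongr
        · exact le_self_add
        · exact hδ.le
    _ = ε * ENNReal.ofReal δ := by
        rw [mul_right_comm, ENNReal.mul_div_cancel (by simp) (by simp)]

end IsLipschitzDomain

/-! ### Hardy's inequality -/

lemma lintegral_rpow_le_measure_univ_rpow_mul {α : Type*} [MeasurableSpace α] {μ : Measure α}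
    {p : ℝ} (hp : 1 ≤ p) {g : α → ℝ≥0∞} (hg : AEMeasurable g μ) :
    (∫⁻ x, g x ∂μ) ^ p ≤ μ univ ^ (p - 1) * ∫⁻ x, g x ^ p ∂μ := by
  have hp0 : 0 < p := zero_lt_one.trans_le hp
  have h := ENNReal.rpow_le_rpow
    (eLpNorm'_le_eLpNorm'_mul_rpow_measure_univ one_pos hp hg.aestronglyMeasurable) hp0.le
  simp only [eLpNorm', enorm_eq_self, ENNReal.rpow_one, div_one] at h
  rw [ENNReal.mul_rpow_of_nonneg _ _ hp0.le, ← ENNReal.rpow_mul, ← ENNReal.rpow_mul,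
    one_div_mul_cancel hp0.ne', ENNReal.rpow_one, mul_comm, sub_mul, one_mul,
    one_div_mul_cancel hp0.ne'] at h
  exact h

namespace GraphChart

variable (κ : GraphChart Ω) {ℓ : ℝ} {F : Euc d → ℝ≥0∞}

lemma map_mem_collar {x : Euc (d - 1)} (hx : x ∈ ball κ.center κ.radius) (hℓ : ℓ ≤ κ.height)
    {t : ℝ} (ht : t ∈ Ioo 0 ℓ) : κ.map (x, t) ∈ collar Ω ℓ := by
  have hx2 := κ.ball_subset_ball_two_mul hx
  have ht2 : t ∈ Ioo (-κ.height) κ.height :=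
    ⟨(neg_lt_zero.2 κ.height_pos).trans ht.1, ht.2.trans_le hℓ⟩
  refine ⟨(κ.mem_iff x hx2 t ht2).2 ht.1, ?_⟩
  calc infDist (κ.map (x, t)) (frontier Ω)
      ≤ dist (κ.map (x, t)) (κ.map (x, 0)) := infDist_le_dist_of_mem (κ.map_zero_mem_frontier hx2)
    _ = t := by
        rw [κ.map_eq_add_smul x t, dist_eq_norm, add_sub_cancel_left, norm_smul, κ.norm_dir,
          mul_one, Real.norm_eq_abs, abs_of_pos ht.1]
    _ < ℓ := ht.2

lemma prod_subset_preimage_collar (hℓ : ℓ ≤ κ.height) :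
    ball κ.center κ.radius ×ˢ Ioo 0 ℓ ⊆ κ.map ⁻¹' collar Ω ℓ :=
  fun _ hz => κ.map_mem_collar hz.1 hℓ hz.2

lemma preimage_collar_inter_cyl_subset (δ : ℝ) :
    κ.map ⁻¹' (collar Ω δ ∩ κ.cyl) ⊆ ball κ.center κ.radius ×ˢ Ioo 0 (κ.lip * δ) := by
  rintro ⟨x, t⟩ ⟨hcol, ⟨x', t'⟩, ⟨hx, ht⟩, he⟩
  obtain ⟨rfl, rfl⟩ := Prod.mk.inj (κ.map.injective he)
  have hx2 := κ.ball_subset_ball_two_mul hx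
  have hlip : (0 : ℝ) < κ.lip := zero_lt_one.trans_le κ.one_le_lip
  exact ⟨hx, (κ.mem_iff _ hx2 _ ht).1 hcol.1,
    (κ.le_mul_infDist _ hx2 _ ht).trans_lt (mul_lt_mul_of_pos_left hcol.2 hlip)⟩

lemma aemeasurable_comp_map (hℓ : ℓ ≤ κ.height) (hF : AEMeasurable F (volume.restrict Ω)) :
    AEMeasurable (fun z => F (κ.map z))
      ((volume.restrict (ball κ.center κ.radius)).prod (volume.restrict (Ioo 0 ℓ))) := by
  rw [Measure.prod_restrict, ← Measure.volume_eq_prod]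
  have hpre := (κ.measurePreserving_map.restrict_preimage_emb κ.map.measurableEmbedding Ω)
  exact (hF.comp_quasiMeasurePreserving hpre.quasiMeasurePreserving).mono_set
    ((κ.prod_subset_preimage_collar hℓ).trans (preimage_mono (collar_subset Ω ℓ)))

lemma lintegral_map_eq (hℓ : ℓ ≤ κ.height) (hF : AEMeasurable F (volume.restrict Ω)) :
    ∫⁻ x in ball κ.center κ.radius, ∫⁻ t in Ioo 0 ℓ, F (κ.map (x, t)) =
      ∫⁻ z in ball κ.center κ.radius ×ˢ Ioo 0 ℓ, F (κ.map z) := by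
  rw [← lintegral_prod _ (κ.aemeasurable_comp_map hℓ hF), Measure.prod_restrict,
    Measure.volume_eq_prod]

lemma lintegral_map_le (hℓ : ℓ ≤ κ.height) (hF : AEMeasurable F (volume.restrict Ω)) :
    ∫⁻ x in ball κ.center κ.radius, ∫⁻ t in Ioo 0 ℓ, F (κ.map (x, t)) ≤
      ∫⁻ y in collar Ω ℓ, F y := by
  rw [κ.lintegral_map_eq hℓ hF,
    ← κ.measurePreserving_map.setLIntegral_comp_preimage_emb κ.map.measurableEmbedding]
  exact lintegral_mono_set (κ.prod_subset_preimage_collar hℓ)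

lemma lintegral_collar_inter_cyl_le {δ : ℝ} (hδ : κ.lip * δ ≤ κ.height)
    (hF : AEMeasurable F (volume.restrict Ω)) :
    ∫⁻ y in collar Ω δ ∩ κ.cyl, F y ≤
      ∫⁻ x in ball κ.center κ.radius, ∫⁻ t in Ioo 0 (κ.lip * δ), F (κ.map (x, t)) := by
  rw [κ.lintegral_map_eq hδ hF,
    ← κ.measurePreserving_map.setLIntegral_comp_preimage_emb κ.map.measurableEmbedding]
  exact lintegral_mono_set (κ.preimage_collar_inter_cyl_subset δ)

lemma hasDerivAt_map (x : Euc (d - 1)) (t : ℝ) :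
    HasDerivAt (fun t => κ.map (x, t)) κ.dir t := by
  rw [funext (κ.map_eq_add_smul x)]
  simpa using ((hasDerivAt_id t).smul_const κ.dir).const_add (κ.map (x, 0))

variable {f : Euc d → ℝ}

lemma enorm_le_add_lintegral_enorm_fderiv (hΩ : IsOpen Ω) (hf : ContDiffOn ℝ 1 f Ω)
    (hℓ : ℓ ≤ κ.height) {x : Euc (d - 1)} (hx : x ∈ ball κ.center κ.radius) {s t : ℝ}
    (hs : s ∈ Ioo 0 ℓ) (ht : t ∈ Ioo 0 ℓ) :
    ‖f (κ.map (x, t))‖ₑ ≤ ‖f (κ.map (x, s))‖ₑ +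
      ∫⁻ r in Ioo 0 ℓ, ‖fderiv ℝ f (κ.map (x, r))‖ₑ := by
  have hsub : uIcc s t ⊆ Ioo 0 ℓ := ordConnected_Ioo.uIcc_subset hs ht
  have hmem : ∀ r ∈ uIcc s t, κ.map (x, r) ∈ Ω := fun r hr =>
    (κ.map_mem_collar hx hℓ (hsub hr)).1
  have hderiv : ∀ r ∈ uIcc s t, HasDerivAt (fun r => f (κ.map (x, r)))
      (fderiv ℝ f (κ.map (x, r)) κ.dir) r := fun r hr =>
    ((hf.contDiffAt (hΩ.mem_nhds (hmem r hr))).differentiableAt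
      one_ne_zero).hasFDerivAt.comp_hasDerivAt r (κ.hasDerivAt_map x r)
  have hcont : ContinuousOn (fun r => fderiv ℝ f (κ.map (x, r)) κ.dir) (uIcc s t) :=
    ((hf.continuousOn_fderiv_of_isOpen hΩ le_rfl).comp
      (κ.map.continuous.comp (by fun_prop)).continuousOn hmem).clm_apply continuousOn_const
  have hFTC := intervalIntegral.integral_eq_sub_of_hasDerivAt hderiv hcont.intervalIntegrable
  have hbound : ‖f (κ.map (x, t)) - f (κ.map (x, s))‖ₑ ≤
      ∫⁻ r in Ioo 0 ℓ, ‖fderiv ℝ f (κ.map (x, r))‖ₑ := by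
    rw [← hFTC, ← ofReal_norm, intervalIntegral.norm_intervalIntegral_eq, ofReal_norm]
    refine (enorm_integral_le_lintegral_enorm _).trans
      ((lintegral_mono_set (uIoc_subset_uIcc.trans hsub)).trans (lintegral_mono fun r => ?_))
    exact enorm_le_iff_norm_le.2
      (by simpa [κ.norm_dir] using (fderiv ℝ f (κ.map (x, r))).le_opNorm κ.dir)
  calc ‖f (κ.map (x, t))‖ₑ = ‖f (κ.map (x, s)) + (f (κ.map (x, t)) - f (κ.map (x, s)))‖ₑ := by
        rw [add_sub_cancel]
    _ ≤ _ := (enorm_add_le _ _).trans (by gcongr)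

lemma ae_iInf_map_eq_zero (hd : 1 ≤ d) (hΩ : IsLipschitzDomain Ω) {h : Euc d → ℝ≥0∞}
    (hm : AEMeasurable h (volume.restrict Ω))
    (hlim : ∀ᵐ Q ∂(sMeasure Ω), Tendsto h (𝓝[ntCone Ω Q] Q) (𝓝 0))
    (hmax : ∫⁻ Q, (⨆ x ∈ ntCone Ω Q, h x) ∂(sMeasure Ω) ≠ ∞) (hℓ0 : 0 < ℓ) (hℓ : ℓ ≤ κ.height) :
    ∀ᵐ x ∂(volume.restrict (ball κ.center κ.radius)), ⨅ s ∈ Ioo 0 ℓ, h (κ.map (x, s)) = 0 := by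
  obtain ⟨ρ, -, hρ, hρlim⟩ := exists_seq_strictAnti_tendsto' hℓ0
  set avg : ℕ → Euc (d - 1) → ℝ≥0∞ := fun k x =>
    (∫⁻ s in Ioo 0 (ρ k), h (κ.map (x, s))) / ENNReal.ofReal (ρ k) with havg
  have hρℓ : ∀ k, ρ k ≤ κ.height := fun k => (hρ k).2.le.trans hℓ
  have hρlim' : Tendsto ρ atTop (𝓝[>] 0) := tendsto_nhdsWithin_of_tendsto_nhds_of_eventually_within
    _ hρlim (Eventually.of_forall fun k => (hρ k).1)
  have havgm : ∀ k, AEMeasurable (avg k) (volume.restrict (ball κ.center κ.radius)) := fun k =>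
    ((κ.aemeasurable_comp_map (hρℓ k) hm).lintegral_prod_right').div_const _
  have hzero : ∫⁻ x in ball κ.center κ.radius, ⨅ k, avg k x = 0 := by
    refine le_antisymm (le_of_forall_pos_le_add fun ε hε => ?_) zero_le
    obtain ⟨k, hk⟩ := (hρlim'.eventually
      (hΩ.eventually_lintegral_collar_le hd hlim hmax hε.ne')).exists
    rw [zero_add]
    refine (lintegral_mono fun x => iInf_le _ k).trans ?_
    simp only [havg, div_eq_mul_inv]
    rw [lintegral_mul_const' _ _ (by simp [(hρ k).1]), ← div_eq_mul_inv]
    exact ENNReal.div_le_of_le_mul ((κ.lintegral_map_le (hρℓ k) hm).trans hk)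
  rw [lintegral_eq_zero_iff' (AEMeasurable.iInf havgm)] at hzero
  filter_upwards [hzero] with x hx
  refine le_antisymm (le_of_le_of_eq (le_iInf fun k => ?_) hx) zero_le
  rw [ENNReal.le_div_iff_mul_le (by simp [(hρ k).1]) (by simp)]
  calc (⨅ s ∈ Ioo 0 ℓ, h (κ.map (x, s))) * ENNReal.ofReal (ρ k)
      = ∫⁻ _ in Ioo 0 (ρ k), ⨅ s ∈ Ioo 0 ℓ, h (κ.map (x, s)) := by
        rw [setLIntegral_const, Real.volume_Ioo, sub_zero]
    _ ≤ ∫⁻ s in Ioo 0 (ρ k), h (κ.map (x, s)) :=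
        setLIntegral_mono' measurableSet_Ioo fun s hs =>
          iInf₂_le s ⟨hs.1, hs.2.trans (hρ k).2⟩

lemma ae_enorm_le_lintegral_enorm_fderiv (hd : 1 ≤ d) (hΩ : IsLipschitzDomain Ω)
    (hf : ContDiffOn ℝ 1 f Ω) (hlim : ∀ᵐ Q ∂(sMeasure Ω), NTLim Ω f Q 0) (hℓ0 : 0 < ℓ)
    (hℓ : ℓ ≤ κ.height) :
    ∀ᵐ x ∂(volume.restrict (ball κ.center κ.radius)), ∀ t ∈ Ioo 0 ℓ,
      ‖f (κ.map (x, t))‖ₑ ≤ ∫⁻ r in Ioo 0 ℓ, ‖fderiv ℝ f (κ.map (x, r))‖ₑ := by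
  have := hΩ.isFiniteMeasure hd
  -- Truncating at `1` makes the nontangential maximal function integrable.
  have htrunc := κ.ae_iInf_map_eq_zero hd hΩ (h := fun y => min ‖f y‖ₑ 1)
    ((hf.continuousOn.enorm.inf continuousOn_const).aemeasurable hΩ.1.measurableSet) ?_ ?_ hℓ0 hℓ
  · filter_upwards [htrunc, ae_restrict_mem isOpen_ball.measurableSet] with x hx0 hx t ht
    have hmin : min (‖f (κ.map (x, t))‖ₑ - ∫⁻ r in Ioo 0 ℓ, ‖fderiv ℝ f (κ.map (x, r))‖ₑ) 1 ≤ 0 :=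
      hx0 ▸ le_iInf₂ fun s hs => min_le_min_right _ (tsub_le_iff_right.2
        (κ.enorm_le_add_lintegral_enorm_fderiv hΩ.1 hf hℓ hx hs ht))
    rw [nonpos_iff_eq_zero, min_eq_iff] at hmin
    exact tsub_eq_zero_iff_le.1 (hmin.resolve_right fun h => one_ne_zero h.1).1
  · filter_upwards [hlim] with Q hQ
    simpa using hQ.enorm.min (tendsto_const_nhds (x := (1 : ℝ≥0∞)))
  · refine ((lintegral_mono (g := fun _ => 1) fun Q => ?_).trans_lt (by simp)).ne
    exact iSup₂_le fun x _ => min_le_right _ _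

lemma ae_lintegral_enorm_rpow_le (hd : 1 ≤ d) (hΩ : IsLipschitzDomain Ω) (hf : ContDiffOn ℝ 1 f Ω)
    (hlim : ∀ᵐ Q ∂(sMeasure Ω), NTLim Ω f Q 0) (hℓ0 : 0 < ℓ) (hℓ : ℓ ≤ κ.height) {p : ℝ}
    (hp : 1 ≤ p) :
    ∀ᵐ x ∂(volume.restrict (ball κ.center κ.radius)),
      ∫⁻ t in Ioo 0 ℓ, ‖f (κ.map (x, t))‖ₑ ^ p ≤
        ENNReal.ofReal ℓ ^ p * ∫⁻ t in Ioo 0 ℓ, ‖fderiv ℝ f (κ.map (x, t))‖ₑ ^ p := by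
  have hf' : AEMeasurable (fun y => ‖fderiv ℝ f y‖ₑ) (volume.restrict Ω) :=
    (hf.continuousOn_fderiv_of_isOpen hΩ.1 le_rfl).enorm.aemeasurable hΩ.1.measurableSet
  filter_upwards [κ.ae_enorm_le_lintegral_enorm_fderiv hd hΩ hf hlim hℓ0 hℓ,
    (κ.aemeasurable_comp_map hℓ hf').aestronglyMeasurable.prodMk_left] with x hx hxm
  calc ∫⁻ t in Ioo 0 ℓ, ‖f (κ.map (x, t))‖ₑ ^ p
      ≤ ∫⁻ _ in Ioo 0 ℓ, (∫⁻ r in Ioo 0 ℓ, ‖fderiv ℝ f (κ.map (x, r))‖ₑ) ^ p :=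
        setLIntegral_mono' measurableSet_Ioo fun t ht => by gcongr; exact hx t ht
    _ = ENNReal.ofReal ℓ * (∫⁻ r in Ioo 0 ℓ, ‖fderiv ℝ f (κ.map (x, r))‖ₑ) ^ p := by
        rw [setLIntegral_const, Real.volume_Ioo, sub_zero, mul_comm]
    _ ≤ ENNReal.ofReal ℓ * (ENNReal.ofReal ℓ ^ (p - 1) *
          ∫⁻ r in Ioo 0 ℓ, ‖fderiv ℝ f (κ.map (x, r))‖ₑ ^ p) := by
        gcongr
        simpa using lintegral_rpow_le_measure_univ_rpow_mul hp hxm.aemeasurable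
    _ = _ := by
        rw [← mul_assoc, ENNReal.rpow_sub _ _ (by simp [hℓ0]) (by simp), ENNReal.rpow_one,
          ENNReal.mul_div_cancel (by simp [hℓ0]) (by simp)]

lemma lintegral_collar_inter_cyl_enorm_rpow_le (hd : 1 ≤ d) (hΩ : IsLipschitzDomain Ω)
    (hf : ContDiffOn ℝ 1 f Ω) (hlim : ∀ᵐ Q ∂(sMeasure Ω), NTLim Ω f Q 0) {p : ℝ} (hp : 1 ≤ p)
    {δ : ℝ} (hδ0 : 0 < δ) (hδ : κ.lip * δ ≤ κ.height) :
    ∫⁻ y in collar Ω δ ∩ κ.cyl, ‖f y‖ₑ ^ p ≤ ENNReal.ofReal (κ.lip * δ) ^ p *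
      ∫⁻ y in collar Ω (κ.lip * δ), ‖fderiv ℝ f y‖ₑ ^ p := by
  have hℓ0 : 0 < κ.lip * δ := mul_pos (zero_lt_one.trans_le κ.one_le_lip) hδ0
  have hfm : AEMeasurable (fun y => ‖f y‖ₑ ^ p) (volume.restrict Ω) :=
    (hf.continuousOn.enorm.aemeasurable hΩ.1.measurableSet).pow_const p
  have hf'm : AEMeasurable (fun y => ‖fderiv ℝ f y‖ₑ ^ p) (volume.restrict Ω) :=
    ((hf.continuousOn_fderiv_of_isOpen hΩ.1 le_rfl).enorm.aemeasurable
      hΩ.1.measurableSet).pow_const p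
  calc ∫⁻ y in collar Ω δ ∩ κ.cyl, ‖f y‖ₑ ^ p
      ≤ ∫⁻ x in ball κ.center κ.radius, ∫⁻ t in Ioo 0 (κ.lip * δ), ‖f (κ.map (x, t))‖ₑ ^ p :=
        κ.lintegral_collar_inter_cyl_le hδ hfm
    _ ≤ ∫⁻ x in ball κ.center κ.radius, ENNReal.ofReal (κ.lip * δ) ^ p *
          ∫⁻ t in Ioo 0 (κ.lip * δ), ‖fderiv ℝ f (κ.map (x, t))‖ₑ ^ p :=
        lintegral_mono_ae (κ.ae_lintegral_enorm_rpow_le hd hΩ hf hlim hℓ0 hδ hp)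
    _ = ENNReal.ofReal (κ.lip * δ) ^ p * ∫⁻ x in ball κ.center κ.radius,
          ∫⁻ t in Ioo 0 (κ.lip * δ), ‖fderiv ℝ f (κ.map (x, t))‖ₑ ^ p :=
        lintegral_const_mul' _ _
          (ENNReal.rpow_ne_top_of_nonneg (by linarith) ENNReal.ofReal_ne_top)
    _ ≤ _ := by
        gcongr
        exact κ.lintegral_map_le hδ hf'm

end GraphChart

lemma lintegral_biUnion_finset_le {α β : Type*} [MeasurableSpace α] {μ : Measure α} (s : Finset β)
    (t : β → Set α) (f : α → ℝ≥0∞) :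
    ∫⁻ x in ⋃ i ∈ s, t i, f x ∂μ ≤ ∑ i ∈ s, ∫⁻ x in t i, f x ∂μ := by
  rw [← Finset.tsum_subtype s fun i => ∫⁻ x in t i, f x ∂μ, ← iUnion_subtype (· ∈ s) fun i => t i]
  exact lintegral_iUnion_le _ _

lemma IsLipschitzDomain.exists_hardy (hd : 1 ≤ d) (hΩ : IsLipschitzDomain Ω) {p : ℝ}
    (hp : 1 ≤ p) : ∃ C : ℝ≥0, ∃ Λ ≥ (1 : ℝ), ∀ᶠ δ in 𝓝[>] 0, ∀ f : Euc d → ℝ,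
      ContDiffOn ℝ 1 f Ω → (∀ᵐ Q ∂(sMeasure Ω), NTLim Ω f Q 0) →
      ∫⁻ y in collar Ω δ, ‖f y‖ₑ ^ p ≤ C * ENNReal.ofReal δ ^ p *
        ∫⁻ y in collar Ω (Λ * δ), ‖fderiv ℝ f y‖ₑ ^ p := by
  obtain ⟨s, δ₀, Λ, hδ₀, hΛ, hs, hcov⟩ := hΩ.exists_charts hd
  have hΛ0 : 0 < Λ := by linarith
  refine ⟨(s.card * Λ ^ p).toNNReal, Λ, hΛ, ?_⟩
  filter_upwards [Ioc_mem_nhdsGT (half_pos hδ₀), Ioc_mem_nhdsGT (div_pos hδ₀ hΛ0)]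
    with δ hδ hδΛ f hf hlim
  have hδ0 : 0 < δ := hδ.1
  have hcover : collar Ω δ ⊆ ⋃ κ ∈ s, collar Ω δ ∩ κ.cyl := fun x hx => by
    obtain ⟨κ, hκ, hxκ⟩ := hcov x (hx.2.trans (by linarith [hδ.2]))
    exact mem_biUnion hκ ⟨hx, hxκ⟩
  have hchart : ∀ κ ∈ s, ∫⁻ y in collar Ω δ ∩ κ.cyl, ‖f y‖ₑ ^ p ≤ ENNReal.ofReal (Λ * δ) ^ p *
      ∫⁻ y in collar Ω (Λ * δ), ‖fderiv ℝ f y‖ₑ ^ p := fun κ hκ => by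
    obtain ⟨-, hheight, hlip⟩ := hs κ hκ
    have hle : κ.lip * δ ≤ Λ * δ := by gcongr
    have hΛδ : Λ * δ ≤ δ₀ := (le_div_iff₀' hΛ0).1 hδΛ.2
    refine (κ.lintegral_collar_inter_cyl_enorm_rpow_le hd hΩ hf hlim hp hδ0
      (hle.trans (hΛδ.trans hheight))).trans ?_
    gcongr
    exact collar_mono Ω hle
  calc ∫⁻ y in collar Ω δ, ‖f y‖ₑ ^ p
      ≤ ∑ κ ∈ s, ∫⁻ y in collar Ω δ ∩ κ.cyl, ‖f y‖ₑ ^ p :=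
        (lintegral_mono_set hcover).trans (lintegral_biUnion_finset_le s _ _)
    _ ≤ ∑ _κ ∈ s, ENNReal.ofReal (Λ * δ) ^ p *
          ∫⁻ y in collar Ω (Λ * δ), ‖fderiv ℝ f y‖ₑ ^ p := Finset.sum_le_sum hchart
    _ = _ := by
        rw [Finset.sum_const, nsmul_eq_mul, ← mul_assoc, ENNReal.ofNNReal_toNNReal]
        congr 1
        rw [ENNReal.ofReal_mul hΛ0.le, ENNReal.mul_rpow_of_nonneg _ _ (by linarith),
          ENNReal.ofReal_mul (by positivity), ENNReal.ofReal_rpow_of_pos hΛ0,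
          ENNReal.ofReal_natCast]
        ring

/-! ### Cutoff functions -/

/-- The iterated partial derivative `D_{i₁} ⋯ D_{iₖ} f` along a list `[i₁, …, iₖ]` of directions. -/
def pders (l : List (Fin d)) (f : Euc d → ℝ) : Euc d → ℝ := l.foldr pder f

/-- The convolution of the indicator function of `S` with `g`. -/
def indConv (S : Set (Euc d)) (g : Euc d → ℝ) (x : Euc d) : ℝ := ∫ t in S, g (x - t)

section Mollification

variable {f g : Euc d → ℝ} {S : Set (Euc d)} {x : Euc d} {δ r : ℝ}

lemma testFun_pders (hf : TestFun f) (l : List (Fin d)) : TestFun (pders l f) := by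
  induction l with
  | nil => exact hf
  | cons i l ih => exact testFun_pder ih i

lemma contDiff_pders (hf : ContDiff ℝ (⊤ : ℕ∞) f) (l : List (Fin d)) :
    ContDiff ℝ (⊤ : ℕ∞) (pders l f) := by
  induction l with
  | nil => exact hf
  | cons i l ih => exact contDiff_pder ih i

lemma pders_comp_smul (hf : ContDiff ℝ (⊤ : ℕ∞) f) (a : ℝ) (l : List (Fin d)) :
    pders l (fun x => f (a • x)) = fun x => a ^ l.length * pders l f (a • x) := by
  induction l with
  | nil => simp [pders]
  | cons i l ih =>
    have hdiff : Differentiable ℝ fun x => pders l f (a • x) :=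
      (differentiable_of_contDiff_infty (contDiff_pders hf l)).comp (differentiable_id.const_smul a)
    change pder i (pders l fun x => f (a • x)) = fun x => _ * pder i (pders l f) (a • x)
    ext x
    rw [ih, pder_const_mul (hdiff x), pder_comp_smul, List.length_cons, pow_succ, mul_assoc]

lemma indConv_eq_convolution (hS : MeasurableSet S) (g : Euc d → ℝ) :
    indConv S g = convolution (S.indicator fun _ => (1 : ℝ)) g
      (ContinuousLinearMap.lsmul ℝ ℝ) volume := by
  ext x
  rw [convolution_lsmul, indConv, ← integral_indicator hS]
  exact integral_congr_ae (ae_of_all _ fun t => by by_cases ht : t ∈ S <;> simp [ht])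

lemma contDiff_indConv (hS : MeasurableSet S) (hg : TestFun g) :
    ContDiff ℝ (⊤ : ℕ∞) (indConv S g) := by
  rw [indConv_eq_convolution hS]
  exact hg.2.contDiff_convolution_right _ ((locallyIntegrable_const 1).indicator hS) hg.1

lemma pder_indConv (hS : MeasurableSet S) (hg : TestFun g) (i : Fin d) :
    pder i (indConv S g) = indConv S (pder i g) := by
  have hloc : LocallyIntegrable (S.indicator fun _ => (1 : ℝ)) volume :=
    (locallyIntegrable_const 1).indicator hS
  ext x
  rw [indConv_eq_convolution hS, indConv_eq_convolution hS, pder,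
    (hg.2.hasFDerivAt_convolution_right (ContinuousLinearMap.lsmul ℝ ℝ) hloc
      (hg.1.of_le (by simp)) x).fderiv,
    convolution_precompR_apply _ hloc (hg.2.fderiv ℝ) (hg.1.continuous_fderiv (by simp))]
  rfl

lemma pders_indConv (hS : MeasurableSet S) (hg : TestFun g) (l : List (Fin d)) :
    pders l (indConv S g) = indConv S (pders l g) := by
  induction l with
  | nil => rfl
  | cons i l ih =>
    exact (congrArg (pder i) ih).trans (pder_indConv hS (testFun_pders hg l) i)

lemma abs_indConv_le (hg : Integrable g) (S : Set (Euc d)) (x : Euc d) :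
    |indConv S g x| ≤ ∫ t, |g t| :=
  calc |indConv S g x| ≤ ∫ t in S, |g (x - t)| := abs_integral_le_integral_abs
    _ ≤ ∫ t, |g (x - t)| := setIntegral_le_integral (hg.abs.comp_sub_left x)
        (ae_of_all _ fun _ => abs_nonneg _)
    _ = ∫ t, |g t| := integral_sub_left_eq_self (fun t => |g t|) volume x

lemma indConv_eq_zero (hg : Function.support g ⊆ ball 0 r) (hx : Disjoint (ball x r) S) :
    indConv S g x = 0 := by
  refine setIntegral_eq_zero_of_forall_eq_zero fun t ht => ?_
  by_contra h
  refine disjoint_left.1 hx (mem_ball'.2 ?_) ht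
  simpa [dist_eq_norm] using hg h

lemma indConv_eq_integral (hg : Function.support g ⊆ ball 0 r) (hx : ball x r ⊆ S) :
    indConv S g x = ∫ t, g t := by
  rw [indConv, setIntegral_eq_integral_of_forall_compl_eq_zero fun t ht => ?_,
    integral_sub_left_eq_self]
  by_contra h
  refine ht (hx (mem_ball'.2 ?_))
  simpa [dist_eq_norm] using hg h

lemma ball_inv_smul_subset_preimage_smul_iff (hδ : 0 < δ) :
    ball (δ⁻¹ • x) 1 ⊆ (δ • ·) ⁻¹' S ↔ ball x δ ⊆ S := by
  rw [← image_subset_iff, image_smul, _root_.smul_ball hδ.ne', smul_inv_smul₀ hδ.ne', mul_one,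
    Real.norm_of_nonneg hδ.le]

lemma exists_mollified_indicator (d n : ℕ) : ∃ C : ℝ, 0 ≤ C ∧ ∀ S : Set (Euc d), MeasurableSet S →
    ∀ δ > 0, ∃ φ : Euc d → ℝ, ContDiff ℝ (⊤ : ℕ∞) φ ∧
      (∀ x, Disjoint (ball x δ) S → φ x = 0) ∧ (∀ x, ball x δ ⊆ S → φ x = 1) ∧
      ∀ l : List (Fin d), l.length ≤ n → ∀ x, |pders l φ x| ≤ C * δ⁻¹ ^ l.length := by
  let b : ContDiffBump (0 : Euc d) := ⟨1 / 2, 1, by norm_num, by norm_num⟩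
  have hb : TestFun (b.normed volume) := ⟨b.contDiff_normed, b.hasCompactSupport_normed⟩
  have hsupp : Function.support (b.normed volume) ⊆ ball 0 1 := b.support_normed_eq.subset
  obtain ⟨C, hC⟩ := ((List.finite_length_le (Fin d) n).image
    fun l => ∫ t, |pders l (b.normed volume) t|).bddAbove
  have hC' : ∀ l : List (Fin d), l.length ≤ n → ∫ t, |pders l (b.normed volume) t| ≤ C :=
    fun l hl => hC (mem_image_of_mem _ hl)
  refine ⟨C, (integral_nonneg fun _ => abs_nonneg _).trans (hC' [] n.zero_le),
    fun S hS δ hδ => ⟨fun x => indConv ((δ • ·) ⁻¹' S) (b.normed volume) (δ⁻¹ • x), ?_⟩⟩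
  have hT : MeasurableSet ((δ • ·) ⁻¹' S : Set (Euc d)) := measurable_const_smul δ hS
  have hsmooth := contDiff_indConv hT hb
  refine ⟨hsmooth.comp (contDiff_id.const_smul δ⁻¹), fun x hx => indConv_eq_zero hsupp ?_,
    fun x hx => ?_, fun l hl x => ?_⟩
  · rw [← subset_compl_iff_disjoint_right] at hx ⊢
    exact (ball_inv_smul_subset_preimage_smul_iff hδ).2 hx
  · beta_reduce
    rw [indConv_eq_integral hsupp ((ball_inv_smul_subset_preimage_smul_iff hδ).2 hx),
      b.integral_normed]
  · rw [pders_comp_smul hsmooth, pders_indConv hT hb, abs_mul, abs_of_nonneg (by positivity),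
      mul_comm]
    gcongr
    have hl' := testFun_pders hb l
    exact (abs_indConv_le (hl'.1.continuous.integrable_of_hasCompactSupport hl'.2) _ _).trans
      (hC' l hl)

end Mollification

lemma ball_infDist_frontier_subset (hΩ : IsOpen Ω) {x : Euc d} (hx : x ∈ Ω) :
    ball x (infDist x (frontier Ω)) ⊆ Ω := by
  rcases (infDist_nonneg (x := x) (s := frontier Ω)).eq_or_lt with h | h
  · simp [← h]
  refine (convex_ball x _).isPreconnected.subset_left_of_subset_union hΩ
    isClosed_closure.isOpen_compl (disjoint_compl_right.mono_left subset_closure) (fun y hy => ?_)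
    ⟨x, mem_ball_self h, hx⟩
  have hyf : y ∉ frontier Ω := fun hyf => disjoint_left.1 disjoint_ball_infDist hy hyf
  rw [hΩ.frontier_eq, Set.mem_sdiff, not_and_not_right] at hyf
  exact (em (y ∈ closure Ω)).imp_left hyf

lemma ball_subset_diff_collar (hΩ : IsOpen Ω) {x : Euc d} {δ r : ℝ} (hδ : 0 ≤ δ)
    (hx : x ∈ Ω \ collar Ω (δ + r)) : ball x r ⊆ Ω \ collar Ω δ := fun y hy => by
  have hr : δ + r ≤ infDist x (frontier Ω) := not_lt.1 fun h => hx.2 ⟨hx.1, h⟩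
  refine ⟨ball_infDist_frontier_subset hΩ hx.1 (ball_subset_ball (by linarith) hy), fun h => ?_⟩
  linarith [h.2, mem_ball'.1 hy, infDist_le_infDist_add_dist (s := frontier Ω) (x := x) (y := y)]

lemma isClosed_diff_collar (hΩ : IsOpen Ω) {δ : ℝ} (hδ : 0 < δ) : IsClosed (Ω \ collar Ω δ) := by
  have heq : Ω \ collar Ω δ = closure Ω ∩ {x | δ ≤ infDist x (frontier Ω)} := by
    ext x
    refine ⟨fun h => ⟨subset_closure h.1, not_lt.1 fun hlt => h.2 ⟨h.1, hlt⟩⟩,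
      fun h => ⟨by_contra fun hx => ?_, fun hx => hx.2.not_ge h.2⟩⟩
    have hzero : infDist x (frontier Ω) = 0 :=
      infDist_zero_of_mem (by rw [hΩ.frontier_eq]; exact ⟨h.1, hx⟩)
    exact hδ.not_ge (hzero ▸ h.2)
  rw [heq]
  exact isClosed_closure.inter (isClosed_le continuous_const (continuous_infDist_pt _))

lemma exists_cutoff (hΩ : IsOpen Ω) (hb : Bornology.IsBounded Ω) (n : ℕ) : ∃ C : ℝ, 0 ≤ C ∧
    ∀ δ > 0, ∃ φ : Euc d → ℝ, TestFun φ ∧ tsupport φ ⊆ Ω ∧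
      (∀ x ∈ Ω \ collar Ω δ, φ =ᶠ[𝓝 x] fun _ => 1) ∧
      ∀ l : List (Fin d), l.length ≤ n → ∀ x, |pders l φ x| ≤ C * δ⁻¹ ^ l.length := by
  obtain ⟨C, hC, h⟩ := exists_mollified_indicator d n
  refine ⟨C * 4 ^ n, by positivity, fun δ hδ => ?_⟩
  obtain ⟨r, hr, rfl⟩ : ∃ r > 0, δ = r + r + r + r := ⟨δ / 4, by positivity, by ring⟩
  obtain ⟨φ, hφ, h0, h1, hbound⟩ := h (Ω \ collar Ω (r + r))
    (isClosed_diff_collar hΩ (by positivity)).measurableSet r hr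
  have hsupp : tsupport φ ⊆ Ω \ collar Ω r := by
    refine closure_minimal (fun x hx => ?_) (isClosed_diff_collar hΩ hr)
    obtain ⟨y, hyx, hy⟩ := not_disjoint_iff.1 fun hdisj => hx (h0 x hdisj)
    exact ball_subset_diff_collar hΩ hr.le hy (mem_ball_comm.1 hyx)
  have hcompact : IsCompact (Ω \ collar Ω r) :=
    isCompact_of_isClosed_isBounded (isClosed_diff_collar hΩ hr) (hb.subset sdiff_subset)
  refine ⟨φ, ⟨hφ, hcompact.of_isClosed_subset (isClosed_tsupport φ) hsupp⟩,
    hsupp.trans sdiff_subset, fun x hx => ?_, fun l hl x => (hbound l hl x).trans ?_⟩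
  · filter_upwards [ball_mem_nhds x hr] with y hy
    exact h1 y (ball_subset_diff_collar hΩ (by positivity)
      (ball_subset_diff_collar hΩ (by positivity) hx hy))
  · have hinv : r⁻¹ = 4 * (r + r + r + r)⁻¹ := by
      field_simp
      ring
    rw [hinv, mul_pow, ← mul_assoc]
    gcongr
    norm_num

/-! ### Estimates in the boundary collar -/

/-- The size of the first-order jet of `w`, scaled to the length `δ`. -/
def jet1 (δ : ℝ) (w : Euc d → ℝ) (x : Euc d) : ℝ := ‖fderiv ℝ w x‖ + δ⁻¹ * |w x|

/-- The size of the second-order jet of `u`, scaled to the length `δ`. -/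
def jet2 (δ : ℝ) (u : Euc d → ℝ) (x : Euc d) : ℝ :=
  gnorm2 u x + δ⁻¹ * jet1 δ u x

section Pointwise

variable {φ f u w : Euc d → ℝ} {x : Euc d} {C δ : ℝ}

lemma jet1_nonneg (hδ : 0 ≤ δ) (w : Euc d → ℝ) (x : Euc d) : 0 ≤ jet1 δ w x := by
  rw [jet1]
  positivity

lemma abs_pder_le (f : Euc d → ℝ) (i : Fin d) (x : Euc d) : |pder i f x| ≤ ‖fderiv ℝ f x‖ := by
  simpa [pder] using (fderiv ℝ f x).le_opNorm (EuclideanSpace.single i 1)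

lemma abs_pder_le_gnorm1 (f : Euc d → ℝ) (i : Fin d) (x : Euc d) : |pder i f x| ≤ gnorm1 f x :=
  Real.abs_le_sqrt (Finset.single_le_sum (f := fun i => pder i f x ^ 2)
    (fun _ _ => sq_nonneg _) (Finset.mem_univ i))

lemma gnorm1_pder_le_gnorm2 (u : Euc d → ℝ) (j : Fin d) (x : Euc d) :
    gnorm1 (pder j u) x ≤ gnorm2 u x :=
  Real.sqrt_le_sqrt <| Finset.sum_le_sum fun i _ =>
    Finset.single_le_sum (f := fun j => pder i (pder j u) x ^ 2)
      (fun _ _ => sq_nonneg _) (Finset.mem_univ j)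

lemma abs_pder_pder_le_gnorm2 (u : Euc d → ℝ) (i j : Fin d) (x : Euc d) :
    |pder i (pder j u) x| ≤ gnorm2 u x :=
  (abs_pder_le_gnorm1 _ i x).trans (gnorm1_pder_le_gnorm2 u j x)

lemma fderiv_apply_eq_sum (f : Euc d → ℝ) (x v : Euc d) :
    fderiv ℝ f x v = ∑ i, v i * pder i f x := by
  conv_lhs => rw [← (EuclideanSpace.basisFun (Fin d) ℝ).sum_repr v, map_sum]
  simp [pder]

lemma norm_fderiv_le_gnorm1 (f : Euc d → ℝ) (x : Euc d) : ‖fderiv ℝ f x‖ ≤ gnorm1 f x := by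
  refine ContinuousLinearMap.opNorm_le_bound _ (Real.sqrt_nonneg _) fun v => ?_
  rw [fderiv_apply_eq_sum, Real.norm_eq_abs, EuclideanSpace.norm_eq, gnorm1, mul_comm]
  simp only [Real.norm_eq_abs, sq_abs]
  rw [← Real.sqrt_mul (by positivity)]
  exact Real.abs_le_sqrt (Finset.sum_mul_sq_le_sq_mul_sq _ _ _)

lemma norm_fderiv_le_sum (f : Euc d → ℝ) (x : Euc d) : ‖fderiv ℝ f x‖ ≤ ∑ i, |pder i f x| := by
  refine ContinuousLinearMap.opNorm_le_bound _ (by positivity) fun v => ?_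
  rw [fderiv_apply_eq_sum, Finset.sum_mul]
  refine (norm_sum_le _ _).trans (Finset.sum_le_sum fun i _ => ?_)
  rw [norm_mul, mul_comm, Real.norm_eq_abs (pder i f x)]
  gcongr
  exact PiLp.norm_apply_le v i

lemma abs_sum_le_nat_mul {a : Fin d → ℝ} {B : ℝ} (h : ∀ i, |a i| ≤ B) : |∑ i, a i| ≤ d * B := by
  simpa using (Finset.abs_sum_le_sum_abs a Finset.univ).trans (Finset.sum_le_sum fun i _ => h i)

lemma abs_gradDot_le {A B : ℝ} (hf : ∀ i, |pder i f x| ≤ A) (hw : ∀ i, |pder i w x| ≤ B) :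
    |gradDot f w x| ≤ d * (A * B) :=
  abs_sum_le_nat_mul fun i => by
    rw [abs_mul]
    exact mul_le_mul (hf i) (hw i) (abs_nonneg _) ((abs_nonneg _).trans (hf i))

lemma pder_gradDot (hf : ContDiffAt ℝ (⊤ : ℕ∞) f x) (hu : ContDiffAt ℝ (⊤ : ℕ∞) u x)
    (i : Fin d) : pder i (gradDot f u) x =
      ∑ j, (pder j f x * pder i (pder j u) x + pder i (pder j f) x * pder j u x) := by
  have hdf := fun j => differentiableAt_of_contDiffAt_infty (contDiffAt_pder hf j)
  have hdu := fun j => differentiableAt_of_contDiffAt_infty (contDiffAt_pder hu j)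
  exact (pder_sum _ (fun j _ => (hdf j).mul (hdu j)) i).trans
    (Finset.sum_congr rfl fun j _ => pder_mul (hdf j) (hdu j) i)

lemma pder_lap (hf : ContDiffAt ℝ (⊤ : ℕ∞) f x) (i : Fin d) :
    pder i (lap f) x = ∑ j, pder i (pder j (pder j f)) x :=
  pder_sum _ (fun j _ => differentiableAt_of_contDiffAt_infty
    (contDiffAt_pder (contDiffAt_pder hf j) j)) i

lemma pder_lapComm (hφ : ContDiff ℝ (⊤ : ℕ∞) φ) (hu : ContDiffAt ℝ (⊤ : ℕ∞) u x) (i : Fin d) :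
    pder i (lapComm φ u) x =
      2 * pder i (gradDot φ u) x + (u x * pder i (lap φ) x + pder i u x * lap φ x) := by
  have hgrad : DifferentiableAt ℝ (gradDot φ u) x := differentiableAt_of_contDiffAt_infty <|
    ContDiffAt.sum fun j _ => (contDiff_pder hφ j).contDiffAt.mul (contDiffAt_pder hu j)
  have hux := differentiableAt_of_contDiffAt_infty hu
  have hlap := differentiable_of_contDiff_infty (contDiff_lap hφ) x
  exact (pder_add (hgrad.const_mul 2) (hux.mul hlap) i).trans
    (congrArg₂ (· + ·) (pder_const_mul hgrad 2 i) (pder_mul hux hlap i))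

lemma abs_lapComm_le (hC : 0 ≤ C) (hδ : 0 < δ)
    (h : ∀ l : List (Fin d), l.length ≤ 3 → |pders l φ x| ≤ C * δ⁻¹ ^ l.length) :
    |lapComm φ w x| ≤ 2 * d * C * δ⁻¹ * jet1 δ w x := by
  have h1 : |gradDot φ w x| ≤ d * (C * δ⁻¹ ^ 1 * ‖fderiv ℝ w x‖) :=
    abs_gradDot_le (fun i => h [i] (by simp)) fun i => abs_pder_le w i x
  have h2 : |lap φ x| ≤ d * (C * δ⁻¹ ^ 2) := abs_sum_le_nat_mul fun i => h [i, i] (by simp)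
  calc |lapComm φ w x| ≤ |2 * gradDot φ w x| + |w x * lap φ x| := abs_add_le _ _
    _ = 2 * |gradDot φ w x| + |w x| * |lap φ x| := by rw [abs_mul, abs_mul, abs_two]
    _ ≤ 2 * (d * (C * δ⁻¹ ^ 1 * ‖fderiv ℝ w x‖)) + |w x| * (2 * (d * (C * δ⁻¹ ^ 2))) := by
        gcongr
        exact h2.trans (le_mul_of_one_le_left (by positivity) one_le_two)
    _ = 2 * d * C * δ⁻¹ * jet1 δ w x := by
        rw [jet1]
        ring

lemma abs_pder_lapComm_le (hφ : ContDiff ℝ (⊤ : ℕ∞) φ) (hu : ContDiffAt ℝ (⊤ : ℕ∞) u x)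
    (hC : 0 ≤ C) (hδ : 0 < δ)
    (h : ∀ l : List (Fin d), l.length ≤ 3 → |pders l φ x| ≤ C * δ⁻¹ ^ l.length) (i : Fin d) :
    |pder i (lapComm φ u) x| ≤ 3 * d * C * δ⁻¹ * jet2 δ u x := by
  have hgrad : |pder i (gradDot φ u) x| ≤
      d * (C * δ⁻¹ ^ 1 * gnorm2 u x + C * δ⁻¹ ^ 2 * ‖fderiv ℝ u x‖) := by
    rw [pder_gradDot hφ.contDiffAt hu]
    refine abs_sum_le_nat_mul fun j => (abs_add_le _ _).trans ?_
    rw [abs_mul, abs_mul]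
    gcongr
    exacts [h [j] (by simp), abs_pder_pder_le_gnorm2 u i j x, h [i, j] (by simp),
      abs_pder_le u j x]
  have hlap : |lap φ x| ≤ d * (C * δ⁻¹ ^ 2) := abs_sum_le_nat_mul fun j => h [j, j] (by simp)
  have hlap' : |pder i (lap φ) x| ≤ d * (C * δ⁻¹ ^ 3) := by
    rw [pder_lap hφ.contDiffAt]
    exact abs_sum_le_nat_mul fun j => h [i, j, j] (by simp)
  have hu2 : 0 ≤ gnorm2 u x := Real.sqrt_nonneg _
  calc |pder i (lapComm φ u) x|
      ≤ 2 * |pder i (gradDot φ u) x| + (|u x| * |pder i (lap φ) x| + |pder i u x| * |lap φ x|) := by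
        rw [pder_lapComm hφ hu, ← abs_two (α := ℝ), ← abs_mul, ← abs_mul, ← abs_mul, abs_two]
        exact (abs_add_le _ _).trans (add_le_add_right (abs_add_le _ _) _)
    _ ≤ 2 * (d * (C * δ⁻¹ ^ 1 * gnorm2 u x + C * δ⁻¹ ^ 2 * ‖fderiv ℝ u x‖)) +
          (|u x| * (d * (C * δ⁻¹ ^ 3)) + ‖fderiv ℝ u x‖ * (d * (C * δ⁻¹ ^ 2))) +
          d * C * δ⁻¹ * (gnorm2 u x + 2 * δ⁻¹ ^ 2 * |u x|) := by
        refine le_add_of_le_of_nonneg ?_ (by positivity)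
        gcongr
        exact abs_pder_le u i x
    _ = 3 * d * C * δ⁻¹ * jet2 δ u x := by
        rw [jet2, jet1]
        ring

lemma abs_greenDensity_le (hφ : ContDiff ℝ (⊤ : ℕ∞) φ) (hu : ContDiffAt ℝ (⊤ : ℕ∞) u x)
    (hC : 0 ≤ C) (hδ : 0 < δ)
    (h : ∀ l : List (Fin d), l.length ≤ 3 → |pders l φ x| ≤ C * δ⁻¹ ^ l.length) :
    |greenDensity φ u w x| ≤ 5 * d ^ 2 * C * δ⁻¹ * (jet1 δ w x * jet2 δ u x) := by
  have : 0 ≤ gnorm2 u x := Real.sqrt_nonneg _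
  have hj1 := jet1_nonneg hδ.le w x
  have h1 : |gradDot (lapComm φ u) w x| ≤ d * (3 * d * C * δ⁻¹ * jet2 δ u x * jet1 δ w x) :=
    abs_gradDot_le (abs_pder_lapComm_le hφ hu hC hδ h) fun i =>
      (abs_pder_le w i x).trans (le_add_of_nonneg_right (by positivity))
  have h2 : |lap u x| ≤ d * jet2 δ u x := abs_sum_le_nat_mul fun i =>
    (abs_pder_pder_le_gnorm2 u i i x).trans
      (le_add_of_nonneg_right (mul_nonneg (by positivity) (jet1_nonneg hδ.le u x)))
  calc |greenDensity φ u w x| ≤ |gradDot (lapComm φ u) w x| + |lapComm φ w x * lap u x| :=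
        abs_add_le _ _
    _ ≤ d * (3 * d * C * δ⁻¹ * jet2 δ u x * jet1 δ w x) +
          2 * d * C * δ⁻¹ * jet1 δ w x * (d * jet2 δ u x) := by
        rw [abs_mul]
        gcongr
        exact abs_lapComm_le hC hδ h
    _ = 5 * d ^ 2 * C * δ⁻¹ * (jet1 δ w x * jet2 δ u x) := by ring

end Pointwise

/-- Lebesgue measure on the boundary collar of width `δ`, divided by `δ`. The `L^p` norms in the
collar are taken with respect to this measure: it makes them comparable to norms on the boundary,
uniformly in `δ`. -/
def collarMeasure (Ω : Set (Euc d)) (δ : ℝ) : Measure (Euc d) :=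
  (ENNReal.ofReal δ)⁻¹ • volume.restrict (collar Ω δ)

section CollarNorms

variable {E : Type*} [NormedAddCommGroup E] {f : Euc d → E} {u w : Euc d → ℝ} {p q δ : ℝ}

lemma lintegral_collarMeasure_le_iff (hδ : 0 < δ) (h : Euc d → ℝ≥0∞) {B : ℝ≥0∞} :
    ∫⁻ x, h x ∂collarMeasure Ω δ ≤ B ↔ ∫⁻ x in collar Ω δ, h x ≤ B * ENNReal.ofReal δ := by
  rw [collarMeasure, lintegral_smul_measure, smul_eq_mul, mul_comm, ← div_eq_mul_inv,
    ENNReal.div_le_iff (by simpa using hδ) ENNReal.ofReal_ne_top]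

lemma eLpNorm_ofReal_le_iff {α : Type*} [MeasurableSpace α] {μ : Measure α} {f : α → E}
    (hp : 0 < p) {B : ℝ≥0∞} :
    eLpNorm f (ENNReal.ofReal p) μ ≤ B ↔ ∫⁻ x, ‖f x‖ₑ ^ p ∂μ ≤ B ^ p := by
  rw [eLpNorm_eq_lintegral_rpow_enorm_toReal (by simpa using hp) ENNReal.ofReal_ne_top,
    ENNReal.toReal_ofReal hp.le, one_div, ENNReal.rpow_inv_le_iff hp]

lemma eLpNorm_collarMeasure_le_iff (hp : 0 < p) (hδ : 0 < δ) {B : ℝ≥0∞} :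
    eLpNorm f (ENNReal.ofReal p) (collarMeasure Ω δ) ≤ B ↔
      ∫⁻ x in collar Ω δ, ‖f x‖ₑ ^ p ≤ B ^ p * ENNReal.ofReal δ := by
  rw [eLpNorm_ofReal_le_iff hp, lintegral_collarMeasure_le_iff hδ]

lemma aestronglyMeasurable_collarMeasure (hΩ : IsOpen Ω) (hf : ContinuousOn f Ω)
    (δ : ℝ) : AEStronglyMeasurable f (collarMeasure Ω δ) :=
  ((hf.aestronglyMeasurable hΩ.measurableSet).mono_measure
    (Measure.restrict_mono (collar_subset Ω δ) le_rfl)).smul_measure _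

lemma lintegral_iSup_enorm_rpow_lt_top (hp : 0 < p) (hw : ntMaxLp Ω w p < ∞) :
    ∫⁻ Q, ⨆ x ∈ ntCone Ω Q, ‖w x‖ₑ ^ p ∂(sMeasure Ω) < ∞ := by
  rw [ntMaxLp, ENNReal.rpow_lt_top_iff_of_pos (by positivity)] at hw
  refine (lintegral_mono fun Q => iSup₂_le fun x hx => ENNReal.rpow_le_rpow ?_ hp.le).trans_lt hw
  exact le_iSup₂ (f := fun x (_ : x ∈ ntCone Ω Q) => (‖w x‖₊ : ℝ≥0∞)) x hx

lemma ntLim_gnorm1_zero {Q : Euc d} (h : ∀ i, NTLim Ω (pder i w) Q 0) :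
    NTLim Ω (gnorm1 w) Q 0 := by
  have hsum := tendsto_finsetSum Finset.univ fun i _ => (h i).pow 2
  have hsqrt := (Real.continuous_sqrt.tendsto _).comp hsum
  simp only [ne_eq, OfNat.ofNat_ne_zero, not_false_eq_true, zero_pow, Finset.sum_const_zero,
    Real.sqrt_zero] at hsqrt
  exact hsqrt

lemma continuousOn_jet1 (hΩ : IsOpen Ω) (hw : ContDiffOn ℝ 1 w Ω) (δ : ℝ) :
    ContinuousOn (jet1 δ w) Ω :=
  (hw.continuousOn_fderiv_of_isOpen hΩ le_rfl).norm.add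
    (continuousOn_const.mul hw.continuousOn.abs)

lemma continuousOn_gnorm2 (hΩ : IsOpen Ω) (hu : ContDiffOn ℝ (⊤ : ℕ∞) u Ω) :
    ContinuousOn (gnorm2 u) Ω :=
  Real.continuous_sqrt.comp_continuousOn <| continuousOn_finsetSum _ fun i _ =>
    continuousOn_finsetSum _ fun j _ =>
      (contDiffOn_pder hΩ (contDiffOn_pder hΩ hu j) i).continuousOn.pow 2

lemma continuousOn_jet2 (hΩ : IsOpen Ω) (hu : ContDiffOn ℝ (⊤ : ℕ∞) u Ω) (δ : ℝ) :
    ContinuousOn (jet2 δ u) Ω :=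
  (continuousOn_gnorm2 hΩ hu).add
    (continuousOn_const.mul (continuousOn_jet1 hΩ (hu.of_le (by simp)) δ))

lemma eLpNorm_jet1_le (hΩ : IsOpen Ω) (hw : ContDiffOn ℝ 1 w Ω) (hq : 1 ≤ q) (δ : ℝ) :
    eLpNorm (jet1 δ w) (ENNReal.ofReal q) (collarMeasure Ω δ) ≤
      eLpNorm (fderiv ℝ w) (ENNReal.ofReal q) (collarMeasure Ω δ) +
        eLpNorm (δ⁻¹ • w) (ENNReal.ofReal q) (collarMeasure Ω δ) := by
  have hm := aestronglyMeasurable_collarMeasure hΩ (hw.continuousOn_fderiv_of_isOpen hΩ le_rfl) δ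
  have hm' := aestronglyMeasurable_collarMeasure hΩ hw.continuousOn δ
  rw [← eLpNorm_norm (fderiv ℝ w), eLpNorm_const_smul, ← eLpNorm_norm w, ← eLpNorm_const_smul]
  exact eLpNorm_add_le hm.norm (hm'.norm.const_smul δ⁻¹) (by simpa using hq)

lemma eLpNorm_jet2_le (hΩ : IsOpen Ω) (hu : ContDiffOn ℝ (⊤ : ℕ∞) u Ω) (hp : 1 ≤ p) (δ : ℝ) :
    eLpNorm (jet2 δ u) (ENNReal.ofReal p) (collarMeasure Ω δ) ≤
      eLpNorm (gnorm2 u) (ENNReal.ofReal p) (collarMeasure Ω δ) +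
        (eLpNorm (δ⁻¹ • fderiv ℝ u) (ENNReal.ofReal p) (collarMeasure Ω δ) +
          eLpNorm (δ⁻¹ ^ 2 • u) (ENNReal.ofReal p) (collarMeasure Ω δ)) := by
  have hu1 : ContDiffOn ℝ 1 u Ω := hu.of_le (by simp)
  have hm := aestronglyMeasurable_collarMeasure hΩ (continuousOn_gnorm2 hΩ hu) δ
  have hm' := aestronglyMeasurable_collarMeasure hΩ (continuousOn_jet1 hΩ hu1 δ) δ
  refine (eLpNorm_add_le hm (hm'.const_smul δ⁻¹) (by simpa using hp)).trans ?_
  rw [pow_two, mul_smul, eLpNorm_const_smul δ⁻¹ (jet1 δ u), eLpNorm_const_smul δ⁻¹ (fderiv ℝ u),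
    eLpNorm_const_smul δ⁻¹ (δ⁻¹ • u), ← mul_add]
  gcongr
  exact eLpNorm_jet1_le hΩ hu1 hp δ

namespace IsLipschitzDomain

lemma exists_eLpNorm_collarMeasure_le (hd : 1 ≤ d) (hΩ : IsLipschitzDomain Ω) (hp : 0 < p)
    (hw : ntMaxLp Ω w p < ∞) :
    ∃ B : ℝ≥0, ∀ᶠ δ in 𝓝[>] 0, eLpNorm w (ENNReal.ofReal p) (collarMeasure Ω δ) ≤ B := by
  obtain ⟨C, hC⟩ := hΩ.exists_lintegral_collar_le hd
  have hfin := lintegral_iSup_enorm_rpow_lt_top hp hw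
  set I := ∫⁻ Q, ⨆ x ∈ ntCone Ω Q, ‖w x‖ₑ ^ p ∂(sMeasure Ω)
  refine ⟨(C * I.toNNReal) ^ (1 / p), ?_⟩
  filter_upwards [hC, self_mem_nhdsWithin] with δ h hδ
  rw [eLpNorm_collarMeasure_le_iff hp hδ, ENNReal.coe_rpow_of_nonneg _ (by positivity),
    ← ENNReal.rpow_mul, one_div_mul_cancel hp.ne', ENNReal.rpow_one, ENNReal.coe_mul,
    ENNReal.coe_toNNReal hfin.ne, mul_right_comm]
  refine (h _).trans ?_
  gcongr
  exact lintegral_mono fun Q => truncMax_le Ω _ _ Q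

lemma tendsto_eLpNorm_collarMeasure_zero (hd : 1 ≤ d) (hΩ : IsLipschitzDomain Ω) (hp : 0 < p)
    (hw : ntMaxLp Ω w p < ∞) (hlim : ∀ᵐ Q ∂(sMeasure Ω), NTLim Ω w Q 0) :
    Tendsto (fun δ => eLpNorm w (ENNReal.ofReal p) (collarMeasure Ω δ)) (𝓝[>] 0) (𝓝 0) := by
  have hlim' : ∀ᵐ Q ∂(sMeasure Ω),
      Tendsto (fun x => ‖w x‖ₑ ^ p) (𝓝[ntCone Ω Q] Q) (𝓝 0) := by
    filter_upwards [hlim] with Q hQ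
    simpa [hp] using (Tendsto.enorm hQ).ennrpow_const p
  refine ENNReal.tendsto_nhds_zero.2 fun ε hε => ?_
  filter_upwards [hΩ.eventually_lintegral_collar_le hd hlim'
    (lintegral_iSup_enorm_rpow_lt_top hp hw).ne (ENNReal.rpow_pos_of_nonneg hε hp.le).ne',
    self_mem_nhdsWithin] with δ h hδ
  exact (eLpNorm_collarMeasure_le_iff hp hδ).2 h

lemma exists_eLpNorm_hardy (hd : 1 ≤ d) (hΩ : IsLipschitzDomain Ω) (hp : 1 ≤ p) :
    ∃ C : ℝ≥0, ∃ Λ > 0, ∀ᶠ δ in 𝓝[>] 0, ∀ f : Euc d → ℝ, ContDiffOn ℝ 1 f Ω →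
      (∀ᵐ Q ∂(sMeasure Ω), NTLim Ω f Q 0) →
      eLpNorm (δ⁻¹ • f) (ENNReal.ofReal p) (collarMeasure Ω δ) ≤
        C * eLpNorm (fderiv ℝ f) (ENNReal.ofReal p) (collarMeasure Ω (Λ * δ)) := by
  obtain ⟨C, Λ, hΛ, h⟩ := hΩ.exists_hardy hd hp
  have hp0 : 0 < p := zero_lt_one.trans_le hp
  have hΛ0 : 0 < Λ := zero_lt_one.trans_le hΛ
  refine ⟨(C * Λ.toNNReal) ^ (1 / p), Λ, hΛ0, ?_⟩
  filter_upwards [h, self_mem_nhdsWithin] with δ h hδ f hf hlim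
  rw [mem_Ioi] at hδ
  set B := eLpNorm (fderiv ℝ f) (ENNReal.ofReal p) (collarMeasure Ω (Λ * δ)) with hB
  have hδp : ‖δ⁻¹‖ₑ ^ p * ENNReal.ofReal δ ^ p = 1 := by
    rw [← ENNReal.mul_rpow_of_nonneg _ _ hp0.le, Real.enorm_of_nonneg (inv_nonneg.2 hδ.le),
      ← ENNReal.ofReal_mul (inv_nonneg.2 hδ.le), inv_mul_cancel₀ hδ.ne', ENNReal.ofReal_one,
      ENNReal.one_rpow]
  rw [eLpNorm_collarMeasure_le_iff hp0 hδ]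
  calc ∫⁻ x in collar Ω δ, ‖(δ⁻¹ • f) x‖ₑ ^ p
      = ‖δ⁻¹‖ₑ ^ p * ∫⁻ x in collar Ω δ, ‖f x‖ₑ ^ p := by
        simp only [Pi.smul_apply, smul_eq_mul, enorm_mul, ENNReal.mul_rpow_of_nonneg _ _ hp0.le]
        exact lintegral_const_mul' _ _ (ENNReal.rpow_ne_top_of_nonneg hp0.le enorm_ne_top)
    _ ≤ ‖δ⁻¹‖ₑ ^ p * (C * ENNReal.ofReal δ ^ p * (B ^ p * ENNReal.ofReal (Λ * δ))) := by
        gcongr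
        exact (h f hf hlim).trans (mul_le_mul_right
          ((eLpNorm_collarMeasure_le_iff hp0 (mul_pos hΛ0 hδ)).1 hB.ge) _)
    _ = (‖δ⁻¹‖ₑ ^ p * ENNReal.ofReal δ ^ p) *
          (C * ENNReal.ofReal Λ * B ^ p * ENNReal.ofReal δ) := by
        rw [ENNReal.ofReal_mul hΛ0.le]
        ring
    _ = (((C * Λ.toNNReal) ^ (1 / p) : ℝ≥0) * B) ^ p * ENNReal.ofReal δ := by
        rw [hδp, one_mul, ENNReal.mul_rpow_of_nonneg _ _ hp0.le,
          ENNReal.coe_rpow_of_nonneg _ (by positivity), ← ENNReal.rpow_mul,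
          one_div_mul_cancel hp0.ne', ENNReal.rpow_one, ENNReal.coe_mul]
        rfl

lemma exists_eLpNorm_hardy_pow (hd : 1 ≤ d) (hΩ : IsLipschitzDomain Ω) (hp : 1 ≤ p) (k : ℕ) :
    ∃ C : ℝ≥0, ∃ Λ > 0, ∀ᶠ δ in 𝓝[>] 0, ∀ f : Euc d → ℝ, ContDiffOn ℝ 1 f Ω →
      (∀ᵐ Q ∂(sMeasure Ω), NTLim Ω f Q 0) →
      eLpNorm (δ⁻¹ ^ (k + 1) • f) (ENNReal.ofReal p) (collarMeasure Ω δ) ≤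
        C * eLpNorm ((Λ * δ)⁻¹ ^ k • fderiv ℝ f) (ENNReal.ofReal p) (collarMeasure Ω (Λ * δ)) := by
  obtain ⟨C, Λ, hΛ, h⟩ := hΩ.exists_eLpNorm_hardy hd hp
  refine ⟨‖Λ ^ k‖₊ * C, Λ, hΛ, h.mono fun δ hδ f hf hlim => ?_⟩
  have hscale : δ⁻¹ ^ k = Λ ^ k * (Λ * δ)⁻¹ ^ k := by
    rw [← mul_pow, mul_inv, mul_inv_cancel_left₀ hΛ.ne']
  rw [pow_succ, mul_smul, eLpNorm_const_smul, eLpNorm_const_smul _ (fderiv ℝ f), hscale, enorm_mul,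
    ENNReal.coe_mul, ← enorm_eq_nnnorm, mul_assoc, mul_assoc, mul_left_comm (C : ℝ≥0∞)]
  gcongr
  exact hδ f hf hlim

lemma tendsto_eLpNorm_jet1_zero (hd : 1 ≤ d) (hΩ : IsLipschitzDomain Ω) (hq : 1 ≤ q)
    (hw : ContDiffOn ℝ 1 w Ω) (hmax : ntMaxLp Ω (gnorm1 w) q < ∞)
    (hlim : ∀ᵐ Q ∂(sMeasure Ω), NTLim Ω w Q 0 ∧ ∀ i, NTLim Ω (pder i w) Q 0) :
    Tendsto (fun δ => eLpNorm (jet1 δ w) (ENNReal.ofReal q) (collarMeasure Ω δ))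
      (𝓝[>] 0) (𝓝 0) := by
  have hgrad : Tendsto (fun δ => eLpNorm (fderiv ℝ w) (ENNReal.ofReal q) (collarMeasure Ω δ))
      (𝓝[>] 0) (𝓝 0) :=
    tendsto_of_tendsto_of_tendsto_of_le_of_le tendsto_const_nhds
      (hΩ.tendsto_eLpNorm_collarMeasure_zero hd (zero_lt_one.trans_le hq) hmax
        (hlim.mono fun Q h => ntLim_gnorm1_zero h.2))
      (fun _ => zero_le) fun _ => eLpNorm_mono_real (norm_fderiv_le_gnorm1 w)
  obtain ⟨C, Λ, hΛ, hardy⟩ := hΩ.exists_eLpNorm_hardy hd hq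
  have hsum := hgrad.add
    (ENNReal.Tendsto.const_mul (a := C) (hgrad.comp (tendsto_const_mul_nhdsGT_zero hΛ)) (by simp))
  rw [mul_zero, add_zero] at hsum
  refine tendsto_of_tendsto_of_tendsto_of_le_of_le' tendsto_const_nhds hsum
    (Eventually.of_forall fun _ => zero_le) ?_
  filter_upwards [hardy] with δ h
  refine (eLpNorm_jet1_le hΩ.1 hw hq δ).trans ?_
  gcongr
  exact h w hw (hlim.mono fun Q hQ => hQ.1)

lemma exists_eLpNorm_inv_smul_fderiv_le (hd : 1 ≤ d) (hΩ : IsLipschitzDomain Ω) (hp : 1 ≤ p)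
    (hu : ContDiffOn ℝ (⊤ : ℕ∞) u Ω) (hmax : ntMaxLp Ω (gnorm2 u) p < ∞)
    (hlim : ∀ᵐ Q ∂(sMeasure Ω), ∀ i, NTLim Ω (pder i u) Q 0) :
    ∃ B : ℝ≥0, ∀ᶠ δ in 𝓝[>] 0,
      eLpNorm (δ⁻¹ • fderiv ℝ u) (ENNReal.ofReal p) (collarMeasure Ω δ) ≤ B := by
  obtain ⟨C, Λ, hΛ, hardy⟩ := hΩ.exists_eLpNorm_hardy hd hp
  obtain ⟨B, hB⟩ := hΩ.exists_eLpNorm_collarMeasure_le hd (zero_lt_one.trans_le hp) hmax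
  refine ⟨d * (C * B), ?_⟩
  filter_upwards [hardy, (tendsto_const_mul_nhdsGT_zero hΛ).eventually hB] with δ h hBδ
  have hsmooth := fun j => contDiffOn_pder hΩ.1 hu j
  calc eLpNorm (δ⁻¹ • fderiv ℝ u) (ENNReal.ofReal p) (collarMeasure Ω δ)
      ≤ eLpNorm (∑ j, δ⁻¹ • fun x => ‖pder j u x‖) (ENNReal.ofReal p) (collarMeasure Ω δ) := by
        rw [← Finset.smul_sum, eLpNorm_const_smul δ⁻¹ (fderiv ℝ u), eLpNorm_const_smul]
        gcongr
        exact eLpNorm_mono_real fun x => by simpa using norm_fderiv_le_sum u x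
    _ ≤ ∑ j, eLpNorm (δ⁻¹ • pder j u) (ENNReal.ofReal p) (collarMeasure Ω δ) := by
        simp only [eLpNorm_const_smul _ (pder _ u), ← eLpNorm_norm (pder _ u),
          ← eLpNorm_const_smul]
        exact eLpNorm_sum_le (fun j _ => (aestronglyMeasurable_collarMeasure hΩ.1
          (hsmooth j).continuousOn δ).norm.const_smul _) (by simpa using hp)
    _ ≤ ∑ _j : Fin d, C * (B : ℝ≥0∞) := Finset.sum_le_sum fun j _ => by
        refine (h _ ((hsmooth j).of_le (by simp)) (hlim.mono fun Q hQ => hQ j)).trans ?_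
        gcongr
        exact (eLpNorm_mono_real fun x =>
          (norm_fderiv_le_gnorm1 _ x).trans (gnorm1_pder_le_gnorm2 u j x)).trans hBδ
    _ = (d * (C * B) : ℝ≥0) := by simp

lemma exists_eLpNorm_jet2_le (hd : 1 ≤ d) (hΩ : IsLipschitzDomain Ω) (hp : 1 ≤ p)
    (hu : ContDiffOn ℝ (⊤ : ℕ∞) u Ω) (hmax : ntMaxLp Ω (gnorm2 u) p < ∞)
    (hlim : ∀ᵐ Q ∂(sMeasure Ω), NTLim Ω u Q 0 ∧ ∀ i, NTLim Ω (pder i u) Q 0) :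
    ∃ B : ℝ≥0, ∀ᶠ δ in 𝓝[>] 0,
      eLpNorm (jet2 δ u) (ENNReal.ofReal p) (collarMeasure Ω δ) ≤ B := by
  obtain ⟨B₂, hB₂⟩ := hΩ.exists_eLpNorm_collarMeasure_le hd (zero_lt_one.trans_le hp) hmax
  obtain ⟨B₁, hB₁⟩ := hΩ.exists_eLpNorm_inv_smul_fderiv_le hd hp hu hmax
    (hlim.mono fun Q h => h.2)
  obtain ⟨C, Λ, hΛ, hardy⟩ := hΩ.exists_eLpNorm_hardy_pow hd hp 1
  refine ⟨B₂ + (B₁ + C * B₁), ?_⟩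
  filter_upwards [hB₂, hB₁, hardy, (tendsto_const_mul_nhdsGT_zero hΛ).eventually hB₁]
    with δ h₂ h₁ hδ h₁'
  refine (eLpNorm_jet2_le hΩ.1 hu hp δ).trans ?_
  push_cast
  gcongr
  refine (hδ u (hu.of_le (by simp)) (hlim.mono fun Q h => h.1)).trans ?_
  gcongr
  simpa only [pow_one] using h₁'

end IsLipschitzDomain

end CollarNorms

section GreenEstimate

variable {u w φ : Euc d → ℝ} {p q δ ρ : ℝ}

lemma integral_mul_bilap_eq_neg_integral_greenDensity (hΩ : IsOpen Ω) (hφ : TestFun φ)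
    (hφΩ : tsupport φ ⊆ Ω) (hφ1 : ∀ x ∈ Ω \ collar Ω δ, φ =ᶠ[𝓝 x] fun _ => 1)
    (hu : Biharmonic Ω u) (hw : ContDiffOn ℝ (⊤ : ℕ∞) w Ω)
    (hw0 : ∀ x ∈ collar Ω δ, bilap w x = 0) :
    ∫ x in Ω, u x * bilap w x = -∫ x in collar Ω δ, greenDensity φ u w x := by
  have hgreen0 : ∀ x ∉ collar Ω δ, greenDensity φ u w x = 0 := fun x hx => by
    by_cases hxΩ : x ∈ Ω
    · exact greenDensity_eq_zero (hφ1 x ⟨hxΩ, hx⟩) u w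
    · exact greenDensity_eq_zero (a := 0)
        (notMem_tsupport_iff_eventuallyEq.1 fun h => hxΩ (hφΩ h)) u w
  rw [setIntegral_eq_integral_of_forall_compl_eq_zero hgreen0,
    ← integral_mul_bilap_sub hφ hΩ hφΩ hu.1 hw, ← integral_indicator hΩ.measurableSet]
  congr 1 with x
  by_cases hxΩ : x ∈ Ω
  · rw [indicator_of_mem hxΩ, hu.2 x hxΩ, mul_zero, sub_zero]
    by_cases hx : x ∈ collar Ω δ
    · simp [hw0 x hx]
    · rw [(hφ1 x ⟨hxΩ, hx⟩).eq_of_nhds, one_mul]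
  · rw [indicator_of_notMem hxΩ, image_eq_zero_of_notMem_tsupport fun h => hxΩ (hφΩ h), zero_mul]

lemma exists_enorm_integral_mul_bilap_le (hΩ : IsOpen Ω) (hb : Bornology.IsBounded Ω)
    (hu : Biharmonic Ω u) (hw : ContDiffOn ℝ (⊤ : ℕ∞) w Ω) :
    ∃ C : ℝ≥0, ∀ δ > 0, (∀ x ∈ collar Ω δ, bilap w x = 0) →
      ‖∫ x in Ω, u x * bilap w x‖ₑ ≤
        C * eLpNorm (fun x => jet1 δ w x * jet2 δ u x) 1 (collarMeasure Ω δ) := by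
  obtain ⟨C, hC, hcutoff⟩ := exists_cutoff hΩ hb 3
  refine ⟨(5 * d ^ 2 * C).toNNReal, fun δ hδ hw0 => ?_⟩
  obtain ⟨φ, hφ, hφΩ, hφ1, hbound⟩ := hcutoff δ hδ
  rw [integral_mul_bilap_eq_neg_integral_greenDensity hΩ hφ hφΩ hφ1 hu hw hw0, enorm_neg]
  calc ‖∫ x in collar Ω δ, greenDensity φ u w x‖ₑ
      ≤ ∫⁻ x in collar Ω δ, ‖greenDensity φ u w x‖ₑ := enorm_integral_le_lintegral_enorm _
    _ ≤ ∫⁻ x in collar Ω δ, ‖5 * d ^ 2 * C * δ⁻¹‖ₑ * ‖jet1 δ w x * jet2 δ u x‖ₑ := by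
        refine setLIntegral_mono' (measurableSet_collar hΩ δ) fun x hx => ?_
        rw [← enorm_mul]
        exact enorm_le_iff_norm_le.2 <| (abs_greenDensity_le hφ.1
          (hu.1.contDiffAt (hΩ.mem_nhds hx.1)) hC hδ (hbound · · x)).trans (le_abs_self _)
    _ = _ := by
        rw [lintegral_const_mul' _ _ enorm_ne_top, enorm_mul, eLpNorm_one_eq_lintegral_enorm,
          collarMeasure, lintegral_smul_measure, smul_eq_mul, ← mul_assoc,
          Real.enorm_of_nonneg (by positivity), Real.enorm_of_nonneg (by positivity),
          ENNReal.ofReal_inv_of_pos hδ]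
        rfl

namespace IsLipschitzDomain

lemma tendsto_eLpNorm_jet1_mul_jet2_zero (hd : 1 ≤ d) (hΩ : IsLipschitzDomain Ω)
    (hpq : p.HolderConjugate q)
    (hu : ContDiffOn ℝ (⊤ : ℕ∞) u Ω) (humax : ntMaxLp Ω (gnorm2 u) p < ∞)
    (hulim : ∀ᵐ Q ∂(sMeasure Ω), NTLim Ω u Q 0 ∧ ∀ i, NTLim Ω (pder i u) Q 0)
    (hw : ContDiffOn ℝ 1 w Ω) (hwmax : ntMaxLp Ω (gnorm1 w) q < ∞)
    (hwlim : ∀ᵐ Q ∂(sMeasure Ω), NTLim Ω w Q 0 ∧ ∀ i, NTLim Ω (pder i w) Q 0) :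
    Tendsto (fun δ => eLpNorm (fun x => jet1 δ w x * jet2 δ u x) 1 (collarMeasure Ω δ))
      (𝓝[>] 0) (𝓝 0) := by
  obtain ⟨B, hB⟩ := hΩ.exists_eLpNorm_jet2_le hd hpq.lt.le hu humax hulim
  have hzero := ENNReal.Tendsto.mul_const (b := B)
    (hΩ.tendsto_eLpNorm_jet1_zero hd hpq.symm.lt.le hw hwmax hwlim) (by simp)
  rw [zero_mul] at hzero
  refine tendsto_of_tendsto_of_tendsto_of_le_of_le' tendsto_const_nhds hzero
    (Eventually.of_forall fun _ => zero_le) ?_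
  filter_upwards [hB] with δ hδ
  have := hpq.symm.ennrealOfReal
  refine (eLpNorm_smul_le_mul_eLpNorm (p := ENNReal.ofReal q) (q := ENNReal.ofReal p)
    (aestronglyMeasurable_collarMeasure hΩ.1 (continuousOn_jet2 hΩ.1 hu δ) δ)
    (aestronglyMeasurable_collarMeasure hΩ.1 (continuousOn_jet1 hΩ.1 hw δ) δ)).trans ?_
  gcongr

lemma integral_mul_bilap_eq_zero (hd : 1 ≤ d) (hΩ : IsLipschitzDomain Ω)
    (hpq : p.HolderConjugate q)
    (hu : Biharmonic Ω u) (humax : ntMaxLp Ω (gnorm2 u) p < ∞)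
    (hulim : ∀ᵐ Q ∂(sMeasure Ω), NTLim Ω u Q 0 ∧ ∀ i, NTLim Ω (pder i u) Q 0)
    (hw : ContDiffOn ℝ (⊤ : ℕ∞) w Ω) (hwmax : ntMaxLp Ω (gnorm1 w) q < ∞)
    (hwlim : ∀ᵐ Q ∂(sMeasure Ω), NTLim Ω w Q 0 ∧ ∀ i, NTLim Ω (pder i w) Q 0)
    (hρ : 0 < ρ) (hw0 : ∀ x ∈ collar Ω ρ, bilap w x = 0) :
    ∫ x in Ω, u x * bilap w x = 0 := by
  obtain ⟨C, hC⟩ := exists_enorm_integral_mul_bilap_le hΩ.1 hΩ.2.1 hu hw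
  have hzero := ENNReal.Tendsto.const_mul (a := C) (hΩ.tendsto_eLpNorm_jet1_mul_jet2_zero hd hpq
    hu.1 humax hulim (hw.of_le (by simp)) hwmax hwlim) (by simp)
  rw [mul_zero] at hzero
  rw [← enorm_eq_zero, ← nonpos_iff_eq_zero]
  refine ge_of_tendsto hzero ?_
  filter_upwards [Ioc_mem_nhdsGT hρ] with δ hδ
  exact hC δ hδ.1 fun x hx => hw0 x (collar_mono Ω hδ.2 hx)

end IsLipschitzDomain

end GreenEstimate

/-! ### Uniqueness -/

section Kernel

lemma integral_mul_comp_add_smul (K f : Euc d → ℝ) (x : Euc d) {ε : ℝ} (hε : ε ≠ 0) :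
    ∫ z, K z * f (x + ε • z) = |(ε ^ d)⁻¹| * ∫ y, K (ε⁻¹ • (y - x)) * f y := by
  have hscale := Measure.integral_comp_smul (volume : Measure (Euc d))
    (fun y => K (ε⁻¹ • y) * f (x + y)) ε
  simp only [inv_smul_smul₀ hε, finrank_euclideanSpace_fin, smul_eq_mul] at hscale
  rw [hscale, ← integral_add_left_eq_self (fun y => K (ε⁻¹ • (y - x)) * f y) x]
  simp only [add_sub_cancel_left]

lemma tendsto_integral_mul_comp_add_smul {K f : Euc d → ℝ} (hK : Continuous K)
    (hK0 : ∀ y, 1 ≤ ‖y‖ → K y = 0) (hf : Measurable f) {x : Euc d} (hx : ContinuousAt f x) :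
    Tendsto (fun ε : ℝ => ∫ z, K z * f (x + ε • z)) (𝓝[>] 0) (𝓝 ((∫ z, K z) * f x)) := by
  have hKc : HasCompactSupport K := HasCompactSupport.intro (isCompact_closedBall 0 1) fun y hy =>
    hK0 y (by simpa using (not_le.1 fun h => hy (by simpa using h)).le)
  obtain ⟨ρ, hρ, hball⟩ := Metric.continuousAt_iff.1 hx 1 one_pos
  rw [← integral_mul_const]
  refine tendsto_integral_filter_of_dominated_convergence (fun z => ‖K z‖ * (‖f x‖ + 1))
    (Eventually.of_forall fun ε => ?_) ?_ ?_ ?_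
  · exact (hK.measurable.mul (hf.comp (by fun_prop))).aestronglyMeasurable
  · filter_upwards [Ioo_mem_nhdsGT hρ] with ε hε
    refine Eventually.of_forall fun z => ?_
    by_cases hz : 1 ≤ ‖z‖
    · simp [hK0 z hz]
    · have hdist : dist (x + ε • z) x < ρ := by
        rw [dist_self_add_left, norm_smul, Real.norm_of_nonneg hε.1.le]
        nlinarith [hε.1, hε.2, norm_nonneg z]
      rw [norm_mul]
      gcongr
      linarith [norm_sub_norm_le (f (x + ε • z)) (f x), dist_eq_norm (f (x + ε • z)) (f x),
        hball hdist]
  · exact (hK.integrable_of_hasCompactSupport hKc).norm.mul_const _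
  · refine Eventually.of_forall fun z => tendsto_const_nhds.mul (hx.tendsto.comp ?_)
    exact (Continuous.tendsto' (by fun_prop) 0 x (by simp)).mono_left nhdsWithin_le_nhds

lemma eq_zero_of_forall_integral_mul_eq_zero (hΩ : IsOpen Ω) {K u : Euc d → ℝ} (hK : Continuous K)
    (hK0 : ∀ y, 1 ≤ ‖y‖ → K y = 0) (hKint : ∫ y, K y ≠ 0) (hu : ContinuousOn u Ω) {x : Euc d}
    (hx : x ∈ Ω) (h : ∀ᶠ ε : ℝ in 𝓝[>] 0, ∫ y in Ω, K (ε⁻¹ • (y - x)) * u y = 0) : u x = 0 := by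
  classical
  have hcont : ContinuousAt (Ω.indicator u) x :=
    (hu.continuousAt (hΩ.mem_nhds hx)).congr <| by
      filter_upwards [hΩ.mem_nhds hx] with y hy using (indicator_of_mem hy u).symm
  have hmeas : Measurable (Ω.indicator u) :=
    hu.measurable_piecewise continuousOn_const hΩ.measurableSet
  have hzero : ∀ᶠ ε : ℝ in 𝓝[>] 0, ∫ z, K z * Ω.indicator u (x + ε • z) = 0 := by
    filter_upwards [h, self_mem_nhdsWithin] with ε hε hε0
    have hindicator : (fun y => K (ε⁻¹ • (y - x)) * Ω.indicator u y) =
        Ω.indicator fun y => K (ε⁻¹ • (y - x)) * u y := by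
      ext y
      by_cases hy : y ∈ Ω <;> simp [hy]
    rw [integral_mul_comp_add_smul K _ x (ne_of_gt hε0), hindicator,
      integral_indicator hΩ.measurableSet, hε, mul_zero]
  have hlim := tendsto_nhds_unique
    ((tendsto_integral_mul_comp_add_smul hK hK0 hmeas hcont).congr' hzero) tendsto_const_nhds
  rwa [indicator_of_mem hx, mul_eq_zero, or_iff_right hKint] at hlim

end Kernel

section BoundaryCorrector

variable {F V f g u : Euc d → ℝ} {p q : ℝ}

lemma gnorm1_sub_le {x : Euc d} (hf : DifferentiableAt ℝ f x) (hg : DifferentiableAt ℝ g x) :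
    gnorm1 (fun y => f y - g y) x ≤ gnorm1 f x + gnorm1 g x := by
  have hnorm : ∀ h : Euc d → ℝ, gnorm1 h x = ‖WithLp.toLp 2 fun i => pder i h x‖ := fun h => by
    simp [gnorm1, EuclideanSpace.norm_eq]
  simp only [hnorm, pder_sub hf hg]
  exact norm_sub_le (WithLp.toLp 2 fun i => pder i f x) (WithLp.toLp 2 fun i => pder i g x)

lemma ntMaxLp_lt_top_of_le [IsFiniteMeasure (sMeasure Ω)] (hq : 1 ≤ q) {B : ℝ≥0}
    (h : ∀ x ∈ Ω, ‖f x‖ₑ ≤ B + ‖g x‖ₑ) (hg : ntMaxLp Ω g q < ∞) : ntMaxLp Ω f q < ∞ := by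
  have hq0 : 0 < q := zero_lt_one.trans_le hq
  have hmax : ∀ Q, ntMax Ω f Q ≤ B + ntMax Ω g Q := fun Q => iSup₂_le fun x hx =>
    (h x hx.1).trans <| by
      gcongr
      exact le_iSup₂ (f := fun x (_ : x ∈ ntCone Ω Q) => (‖g x‖₊ : ℝ≥0∞)) x hx
  rw [ntMaxLp, ENNReal.rpow_lt_top_iff_of_pos (by positivity)] at hg ⊢
  calc ∫⁻ Q, ntMax Ω f Q ^ q ∂(sMeasure Ω)
      ≤ ∫⁻ Q, 2 ^ (q - 1) * (B ^ q + ntMax Ω g Q ^ q) ∂(sMeasure Ω) := lintegral_mono fun Q =>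
        (ENNReal.rpow_le_rpow (hmax Q) hq0.le).trans
          (ENNReal.rpow_add_le_mul_rpow_add_rpow _ _ hq)
    _ = 2 ^ (q - 1) * (B ^ q * sMeasure Ω univ + ∫⁻ Q, ntMax Ω g Q ^ q ∂(sMeasure Ω)) := by
        rw [lintegral_const_mul' _ _ (ENNReal.rpow_ne_top_of_nonneg (by linarith) (by simp)),
          lintegral_add_left measurable_const, lintegral_const]
    _ < ∞ := ENNReal.mul_lt_top (ENNReal.rpow_lt_top_of_nonneg (by linarith) (by simp))
        (ENNReal.add_lt_top.2 ⟨ENNReal.mul_lt_top (ENNReal.rpow_lt_top_of_nonneg hq0.le (by simp))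
          (measure_lt_top _ _), hg⟩)

lemma hasBVals1_sub_zero (hΩ : IsOpen Ω) (hF : ContDiff ℝ (⊤ : ℕ∞) F)
    (hFf : ∀ Q ∈ frontier Ω, F =ᶠ[𝓝 Q] f) (hV : ContDiffOn ℝ (⊤ : ℕ∞) V Ω)
    (hb : HasBVals1 Ω V f) :
    ∀ᵐ Q ∂(sMeasure Ω), NTLim Ω (fun y => F y - V y) Q 0 ∧
      ∀ i, NTLim Ω (pder i fun y => F y - V y) Q 0 := by
  filter_upwards [hb, ae_mem_frontier Ω] with Q hQ hQf
  refine ⟨?_, fun i => ?_⟩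
  · have hlim := ((hF.continuous.tendsto Q).mono_left nhdsWithin_le_nhds).sub hQ.1
    rwa [(hFf Q hQf).eq_of_nhds, sub_self] at hlim
  · have hlim := (((contDiff_pder hF i).continuous.tendsto Q).mono_left nhdsWithin_le_nhds).sub
      (hQ.2 i)
    rw [(eventuallyEq_pder (hFf Q hQf) i).eq_of_nhds, sub_self] at hlim
    refine hlim.congr' ?_
    filter_upwards [self_mem_nhdsWithin] with x hx
    exact (pder_sub (differentiable_of_contDiff_infty hF x)
      (differentiableAt_of_contDiffAt_infty (hV.contDiffAt (hΩ.mem_nhds hx.1))) i).symm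

namespace IsLipschitzDomain

lemma ntMaxLp_gnorm1_sub_lt_top (hd : 1 ≤ d) (hΩ : IsLipschitzDomain Ω) (hq : 1 ≤ q)
    (hF : ContDiff ℝ (⊤ : ℕ∞) F) (hV : ContDiffOn ℝ (⊤ : ℕ∞) V Ω)
    (hmax : ntMaxLp Ω (gnorm1 V) q < ∞) : ntMaxLp Ω (gnorm1 fun y => F y - V y) q < ∞ := by
  have := hΩ.isFiniteMeasure hd
  have hcont : Continuous (gnorm1 F) := Real.continuous_sqrt.comp <|
    continuous_finsetSum _ fun i _ => (contDiff_pder hF i).continuous.pow 2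
  obtain ⟨B, hB⟩ := hΩ.2.1.isCompact_closure.bddAbove_image hcont.continuousOn
  refine ntMaxLp_lt_top_of_le (B := B.toNNReal) hq (fun x hx => ?_) hmax
  have hsub := gnorm1_sub_le (differentiable_of_contDiff_infty hF x)
    (differentiableAt_of_contDiffAt_infty (hV.contDiffAt (hΩ.1.mem_nhds hx)))
  have hnonneg : ∀ h : Euc d → ℝ, 0 ≤ gnorm1 h x := fun h => Real.sqrt_nonneg _
  rw [Real.enorm_of_nonneg (hnonneg _), Real.enorm_of_nonneg (hnonneg _)]
  refine (ENNReal.ofReal_le_ofReal (hsub.trans ?_)).trans ENNReal.ofReal_add_le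
  gcongr
  exact hB (mem_image_of_mem _ (subset_closure hx))

lemma integral_mul_bilap_eq_zero_of_hasBVals1 (hd : 1 ≤ d) (hΩ : IsLipschitzDomain Ω)
    (hpq : p.HolderConjugate q)
    (hu : Biharmonic Ω u) (humax : ntMaxLp Ω (gnorm2 u) p < ∞) (hub : HasBVals1 Ω u fun _ => 0)
    (hV : Biharmonic Ω V) (hVmax : ntMaxLp Ω (gnorm1 V) q < ∞) (hVb : HasBVals1 Ω V f)
    (hF : ContDiff ℝ (⊤ : ℕ∞) F) (hFf : ∀ Q ∈ frontier Ω, F =ᶠ[𝓝 Q] f)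
    {ρ : ℝ} (hρ : 0 < ρ) (hF0 : ∀ x ∈ collar Ω ρ, bilap F x = 0) :
    ∫ x in Ω, u x * bilap F x = 0 := by
  have hbilap : ∀ x ∈ Ω, bilap (fun y => F y - V y) x = bilap F x := fun x hx => by
    rw [bilap_sub hΩ.1 hF.contDiffOn hV.1 hx, hV.2 x hx, sub_zero]
  have hgreen := hΩ.integral_mul_bilap_eq_zero hd hpq hu humax
    (by simpa only [HasBVals1, pder_const] using hub) (hF.contDiffOn.sub hV.1)
    (hΩ.ntMaxLp_gnorm1_sub_lt_top hd hpq.symm.lt.le hF hV.1 hVmax)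
    (hasBVals1_sub_zero hΩ.1 hF hFf hV.1 hVb) hρ
    fun x hx => (hbilap x hx.1).trans (hF0 x hx)
  rw [← hgreen]
  exact setIntegral_congr_fun hΩ.1.measurableSet fun x hx => by simp only [hbilap x hx]

lemma integral_mul_bilap_translate_eq_zero (hd : 1 ≤ d) (hΩ : IsLipschitzDomain Ω)
    (hpq : p.HolderConjugate q)
    (hu : Biharmonic Ω u) (humax : ntMaxLp Ω (gnorm2 u) p < ∞) (hub : HasBVals1 Ω u fun _ => 0)
    {x : Euc d} (hV : Biharmonic Ω V) (hVmax : ntMaxLp Ω (gnorm1 V) q < ∞)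
    (hVb : HasBVals1 Ω V fun y => f (y - x)) {ε : ℝ} (hε : ε < infDist x (frontier Ω))
    (hF : ContDiff ℝ (⊤ : ℕ∞) F) (hFf : ∀ y, ε ≤ ‖y‖ → F y = f y)
    (hF0 : ∀ y, ε ≤ ‖y‖ → bilap F y = 0) :
    ∫ y in Ω, u y * bilap F (y - x) = 0 := by
  have hfrontier : ∀ Q ∈ frontier Ω, (fun y => F (y - x)) =ᶠ[𝓝 Q] fun y => f (y - x) :=
    fun Q hQ => by
      have hfar : ε < ‖Q - x‖ := by
        rw [← dist_eq_norm, dist_comm]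
        exact hε.trans_le (infDist_le_dist_of_mem hQ)
      have hopen : IsOpen {y : Euc d | ε < ‖y - x‖} := isOpen_lt continuous_const (by fun_prop)
      filter_upwards [hopen.mem_nhds hfar] with y hy using hFf _ (le_of_lt hy)
  have hcollar : ∀ y ∈ collar Ω (infDist x (frontier Ω) - ε),
      bilap (fun z => F (z - x)) y = 0 := fun y hy => by
    have hfar : ε ≤ ‖y - x‖ := by
      have := infDist_le_infDist_add_dist (s := frontier Ω) (x := x) (y := y)
      rw [← dist_eq_norm, dist_comm]
      linarith [hy.2]
    simp only [bilap_comp_sub_right, hF0 _ hfar]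
  have hFx : ContDiff ℝ (⊤ : ℕ∞) fun y => F (y - x) := hF.comp (contDiff_id.sub contDiff_const)
  simpa only [bilap_comp_sub_right] using hΩ.integral_mul_bilap_eq_zero_of_hasBVals1 hd hpq hu
    humax hub hV hVmax hVb hFx hfrontier (sub_pos.2 hε) hcollar

end IsLipschitzDomain

end BoundaryCorrector

theorem regularity_uniqueness_general {V u : Euc d → ℝ} {x : Euc d} {p q c : ℝ} (hd : 1 ≤ d)
    (hΩ : IsLipschitzDomain Ω) (hpq : p.HolderConjugate q) (hc : c ≠ 0) (hx : x ∈ Ω)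
    (hV : Biharmonic Ω V) (hVmax : ntMaxLp Ω (gnorm1 V) q < ∞)
    (hVb : HasBVals1 Ω V fun y => fundSol d c (y - x))
    (hu : Biharmonic Ω u) (humax : ntMaxLp Ω (gnorm2 u) p < ∞) (hub : HasBVals1 Ω u fun _ => 0) :
    u x = 0 := by
  obtain ⟨K, hK, hK0, hKint, hreg⟩ := exists_regularized_fundSol hd hc
  have hdist := infDist_frontier_pos hΩ.1 (hΩ.frontier_nonempty hd) hx
  refine eq_zero_of_forall_integral_mul_eq_zero hΩ.1 hK hK0 hKint hu.1.continuousOn hx ?_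
  filter_upwards [Ioo_mem_nhdsGT hdist] with ε hε
  obtain ⟨E, hE, hEfund, A, hA, hEK⟩ := hreg ε hε.1
  have hEK0 : ∀ y, ε ≤ ‖y‖ → bilap E y = 0 := fun y hy => by
    rw [hEK, hK0, mul_zero]
    rwa [norm_smul, norm_inv, Real.norm_of_nonneg hε.1.le, inv_mul_eq_div, one_le_div hε.1]
  have hgreen := hΩ.integral_mul_bilap_translate_eq_zero hd hpq hu humax hub hV hVmax hVb hε.2
    hE hEfund hEK0
  simp only [hEK, mul_left_comm _ A, integral_const_mul, mul_eq_zero, hA, false_or] at hgreen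
  simpa only [mul_comm] using hgreen

/-- Theorem 3.1: if for each pole `x ∈ Ω` the `L^q` Dirichlet problem
with boundary data `D^α Γ^x`, `|α| ≤ 1`, has a solution, then solutions of the `L^p`
regularity problem are unique. -/
theorem regularity_uniqueness
    (d : ℕ) (hd : 2 ≤ d) (Ω : Set (Euc d)) (hΩ : IsLipschitzDomain Ω)
    (p q : ℝ) (hp : 1 < p) (hpq : 1 / p + 1 / q = 1) (c : ℝ) (hc : c ≠ 0)
    (hV : ∀ x ∈ Ω, ∃ V : Euc d → ℝ, Biharmonic Ω V ∧ ntMaxLp Ω (gnorm1 V) q < ⊤ ∧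
      HasBVals1 Ω V (fun y => fundSol d c (y - x))) :
    ∀ u : Euc d → ℝ, Biharmonic Ω u → ntMaxLp Ω (gnorm2 u) p < ⊤ →
      HasBVals1 Ω u (fun _ => 0) → ∀ y ∈ Ω, u y = 0 := by
  intro u hu humax hub x hx
  obtain ⟨V, hV, hVmax, hVb⟩ := hV x hx
  exact regularity_uniqueness_general (by omega) hΩ
    (Real.holderConjugate_iff.2 ⟨hp, by simpa only [one_div] using hpq⟩) hc hx hV hVmax hVb hu
    humax hub

end
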